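/- (Safiullin) For every context-free language L over an alphabet Σ with ε ∉ L, there exists a Lambek categorial grammar with unique type assignment generating L: there exist Lambek types A_a for each letter a ∈ Σ and a target type H (all without the ⁺ connective) such that a word a₁ a₂ … aₘ ∈ Σ⁺ belongs to L if and only if the sequent A_{a₁}, A_{a₂}, …, A_{aₘ} → H is derivable in the Lambek calculus L. Moreover, such a grammar can be effectively constructed from a context-free grammar for L. -/

import Mathlib

/-- Types of the Lambek calculus: primitive types, product `mul`,
left division `ldiv A B = A \ B`, right division `rdiv B A = B / A`. -/
inductive Tp : Type where
  | pr : ℕ → Tp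
  | mul : Tp → Tp → Tp
  | ldiv : Tp → Tp → Tp   -- `ldiv A B` is `A \ B`
  | rdiv : Tp → Tp → Tp   -- `rdiv B A` is `B / A`

/-- Derivability in the Lambek calculus L (with Lambek's non-emptiness
restriction). -/
inductive DerL : List Tp → Tp → Prop where
  | ax (A : Tp) : DerL [A] A
  | ldiv_r {P : List Tp} {A B : Tp} (hne : P ≠ []) :
      DerL (A :: P) B → DerL P (Tp.ldiv A B)
  | ldiv_l {P Γ Δ : List Tp} {A B C : Tp} :
      DerL P A → DerL (Γ ++ B :: Δ) C →
      DerL (Γ ++ P ++ Tp.ldiv A B :: Δ) C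
  | rdiv_r {P : List Tp} {A B : Tp} (hne : P ≠ []) :
      DerL (P ++ [A]) B → DerL P (Tp.rdiv B A)
  | rdiv_l {P Γ Δ : List Tp} {A B C : Tp} :
      DerL P A → DerL (Γ ++ B :: Δ) C →
      DerL (Γ ++ Tp.rdiv B A :: (P ++ Δ)) C
  | mul_r {Γ Δ : List Tp} {A B : Tp} :
      DerL Γ A → DerL Δ B → DerL (Γ ++ Δ) (Tp.mul A B)
  | mul_l {Γ Δ : List Tp} {A B C : Tp} :
      DerL (Γ ++ A :: B :: Δ) C → DerL (Γ ++ Tp.mul A B :: Δ) C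
/-- A context-free grammar over the terminal alphabet `T`, with nonterminals
numbered by naturals: a start nonterminal together with a finite list of
rules, each rewriting a nonterminal to a string of symbols (`Sum.inl` are
terminals, `Sum.inr` are nonterminals). -/
abbrev CFG (T : Type) : Type := ℕ × List (ℕ × List (T ⊕ ℕ))

/-- One rewriting step of the grammar `G`. -/
def CFGStep {T : Type} (G : CFG T) (x y : List (T ⊕ ℕ)) : Prop :=
  ∃ r ∈ G.2, ∃ p q : List (T ⊕ ℕ), x = p ++ Sum.inr r.1 :: q ∧ y = p ++ r.2 ++ q

/-- The language generated by the grammar `G`. -/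
def Lang {T : Type} (G : CFG T) : Set (List T) :=
  { w | Relation.ReflTransGen (CFGStep G) [Sum.inr G.1] (w.map Sum.inl) }

/-- `G` has no ε-rules. -/
def EpsFree {T : Type} (G : CFG T) : Prop := ∀ r ∈ G.2, r.2 ≠ []

/-- A fixed effective Gödel numbering of Lambek types. -/
def encodeTp : Tp → ℕ
  | Tp.pr n => Nat.pair 0 n
  | Tp.mul A B => Nat.pair 1 (Nat.pair (encodeTp A) (encodeTp B))
  | Tp.ldiv A B => Nat.pair 2 (Nat.pair (encodeTp A) (encodeTp B))
  | Tp.rdiv A B => Nat.pair 3 (Nat.pair (encodeTp A) (encodeTp B))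

/-!
The left-corner automaton of an ε-free grammar is a pushdown automaton without states which reads a
letter in every transition. Its stack symbols are coded as words in two bits, a bit standing for a
type of the form `p / p`. As such a type absorbs copies of itself, the codes of all stack symbols
have a common lower bound, and hence so do the types of all transitions. Types with a common lower
bound have a common upper bound, so the single type assigned to a letter can be built from an upper
bound of the types of its transitions; the automaton is then simulated in the calculus.

For the converse, types are interpreted by relations in which the type of the letter `a` leads from
the input `a :: w` to the input `w`, and stack types produce stacks of bits. In this model the
constructed upper bound offers nothing beyond the transitions, so a derivable sequent yields an
accepting run.
-/

/-! ### Cut admissibility -/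

namespace DerL

/-- The sequences that can replace the members of `X` in every derivable sequent: the closure
operator of the canonical model in which cut is proved admissible. The empty sequence is left out
because of Lambek's restriction. -/
def closure (X : Language Tp) : Language Tp :=
  {Γ | Γ ≠ [] ∧ ∀ Δ₁ Δ₂ C, (∀ Γ' ∈ X, DerL (Δ₁ ++ Γ' ++ Δ₂) C) → DerL (Δ₁ ++ Γ ++ Δ₂) C}

theorem nil_notMem_closure (X : Language Tp) : [] ∉ closure X := fun h => h.1 rfl

theorem le_closure {X : Language Tp} (hX : [] ∉ X) : X ≤ closure X :=
  fun _ hΓ => ⟨ne_of_mem_of_not_mem hΓ hX, fun _ _ _ h => h _ hΓ⟩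

theorem closure_mono {X Y : Language Tp} (h : X ≤ Y) : closure X ≤ closure Y :=
  fun _ hΓ => ⟨hΓ.1, fun _ _ _ hY => hΓ.2 _ _ _ fun _ hΓ' => hY _ (h hΓ')⟩

theorem closure_closure_le (X : Language Tp) : closure (closure X) ≤ closure X :=
  fun _ hΓ => ⟨hΓ.1, fun _ _ _ hX => hΓ.2 _ _ _ fun _ hΓ' => hΓ'.2 _ _ _ hX⟩

theorem mul_closure_le (X Y : Language Tp) : X * closure Y ≤ closure (X * Y) := by
  rintro _ ⟨Γ, hΓ, Δ, hΔ, rfl⟩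
  refine ⟨by simp [hΔ.1], fun Δ₁ Δ₂ C h => ?_⟩
  simpa using hΔ.2 (Δ₁ ++ Γ) Δ₂ C fun Δ' hΔ' => by simpa using h _ (Language.append_mem_mul hΓ hΔ')

theorem closure_mul_le (X Y : Language Tp) : closure X * Y ≤ closure (X * Y) := by
  rintro _ ⟨Γ, hΓ, Δ, hΔ, rfl⟩
  refine ⟨by simp [hΓ.1], fun Δ₁ Δ₂ C h => ?_⟩
  simpa using hΓ.2 Δ₁ (Δ ++ Δ₂) C fun Γ' hΓ' => by simpa using h _ (Language.append_mem_mul hΓ' hΔ)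

/-- The interpretation of a type in the canonical model. -/
def interp : Tp → Language Tp
  | Tp.pr n => {Γ | DerL Γ (Tp.pr n)}
  | Tp.mul A B => closure (interp A * interp B)
  | Tp.ldiv A B => {Γ | Γ ≠ [] ∧ ∀ Δ ∈ interp A, Δ ++ Γ ∈ interp B}
  | Tp.rdiv B A => {Γ | Γ ≠ [] ∧ ∀ Δ ∈ interp A, Γ ++ Δ ∈ interp B}

theorem ne_nil {Γ : List Tp} {C : Tp} (h : DerL Γ C) : Γ ≠ [] := by
  induction h <;> simp_all

theorem nil_notMem_interp : ∀ A : Tp, [] ∉ interp A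
  | Tp.pr _ => fun h => ne_nil h rfl
  | Tp.mul _ _ => nil_notMem_closure _
  | Tp.ldiv _ _ => fun h => h.1 rfl
  | Tp.rdiv _ _ => fun h => h.1 rfl

theorem nil_notMem_mul {X Y : Language Tp} (hX : [] ∉ X) : [] ∉ X * Y := by
  rintro ⟨Γ, hΓ, Δ, -, h⟩
  exact hX ((List.append_eq_nil_iff.1 h).1 ▸ hΓ)

theorem nil_notMem_prod_interp {Γ : List Tp} (hΓ : Γ ≠ []) : [] ∉ (Γ.map interp).prod := by
  obtain ⟨A, Γ, rfl⟩ := List.exists_cons_of_ne_nil hΓ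
  exact nil_notMem_mul (nil_notMem_interp A)

theorem le_interp_ldiv {X : Language Tp} {A B : Tp} (hX : [] ∉ X)
    (h : interp A * X ≤ interp B) : X ≤ interp (Tp.ldiv A B) :=
  fun _ hΓ => ⟨ne_of_mem_of_not_mem hΓ hX, fun _ hΔ => h (Language.append_mem_mul hΔ hΓ)⟩

theorem le_interp_rdiv {X : Language Tp} {A B : Tp} (hX : [] ∉ X)
    (h : X * interp A ≤ interp B) : X ≤ interp (Tp.rdiv B A) :=
  fun _ hΓ => ⟨ne_of_mem_of_not_mem hΓ hX, fun _ hΔ => h (Language.append_mem_mul hΓ hΔ)⟩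

theorem interp_mul_interp_ldiv_le (A B : Tp) : interp A * interp (Tp.ldiv A B) ≤ interp B := by
  rintro _ ⟨Δ, hΔ, Γ, hΓ, rfl⟩
  exact hΓ.2 Δ hΔ

theorem interp_rdiv_mul_interp_le (A B : Tp) : interp (Tp.rdiv B A) * interp A ≤ interp B := by
  rintro _ ⟨Γ, hΓ, Δ, hΔ, rfl⟩
  exact hΓ.2 Δ hΔ

theorem closure_interp_le (A : Tp) : closure (interp A) ≤ interp A := by
  induction A with
  | pr n =>
    intro Γ hΓ
    have hder : DerL ([] ++ Γ ++ []) (Tp.pr n) :=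
      hΓ.2 [] [] _ fun Γ' (hΓ' : DerL Γ' (Tp.pr n)) => by simpa using hΓ'
    rwa [List.append_nil] at hder
  | mul A B => exact closure_closure_le _
  | ldiv A B _ ihB =>
    exact le_interp_ldiv (nil_notMem_closure _) ((mul_closure_le _ _).trans
      ((closure_mono (interp_mul_interp_ldiv_le A B)).trans ihB))
  | rdiv B A ihB _ =>
    exact le_interp_rdiv (nil_notMem_closure _) ((closure_mul_le _ _).trans
      ((closure_mono (interp_rdiv_mul_interp_le A B)).trans ihB))

theorem prod_interp_le {Γ : List Tp} {C : Tp} (h : DerL Γ C) :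
    (Γ.map interp).prod ≤ interp C := by
  induction h with
  | ax A => simp
  | ldiv_r hne _ ih => exact le_interp_ldiv (nil_notMem_prod_interp hne) (by simpa using ih)
  | @ldiv_l P Γ Δ A B C _ _ ihA ihB =>
    calc ((Γ ++ P ++ Tp.ldiv A B :: Δ).map interp).prod
        = (Γ.map interp).prod *
            ((P.map interp).prod * interp (Tp.ldiv A B) * (Δ.map interp).prod) := by
          simp [mul_assoc]
      _ ≤ (Γ.map interp).prod * (interp A * interp (Tp.ldiv A B) * (Δ.map interp).prod) := by
          gcongr
      _ ≤ (Γ.map interp).prod * (interp B * (Δ.map interp).prod) := by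
          gcongr; exact interp_mul_interp_ldiv_le A B
      _ ≤ interp C := by simpa using ihB
  | rdiv_r hne _ ih => exact le_interp_rdiv (nil_notMem_prod_interp hne) (by simpa using ih)
  | @rdiv_l P Γ Δ A B C _ _ ihA ihB =>
    calc ((Γ ++ Tp.rdiv B A :: (P ++ Δ)).map interp).prod
        = (Γ.map interp).prod *
            (interp (Tp.rdiv B A) * (P.map interp).prod * (Δ.map interp).prod) := by
          simp [mul_assoc]
      _ ≤ (Γ.map interp).prod * (interp (Tp.rdiv B A) * interp A * (Δ.map interp).prod) := by
          gcongr
      _ ≤ (Γ.map interp).prod * (interp B * (Δ.map interp).prod) := by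
          gcongr; exact interp_rdiv_mul_interp_le A B
      _ ≤ interp C := by simpa using ihB
  | @mul_r Γ Δ A B _ _ ihA ihB =>
    calc ((Γ ++ Δ).map interp).prod
        = (Γ.map interp).prod * (Δ.map interp).prod := by simp
      _ ≤ interp A * interp B := by gcongr
      _ ≤ interp (Tp.mul A B) := le_closure (nil_notMem_mul (nil_notMem_interp A))
  | @mul_l Γ Δ A B C _ ih =>
    calc ((Γ ++ Tp.mul A B :: Δ).map interp).prod
        = (Γ.map interp).prod * (closure (interp A * interp B) * (Δ.map interp).prod) := by
          simp [interp]
      _ ≤ closure ((Γ.map interp).prod * (interp A * interp B * (Δ.map interp).prod)) :=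
          (mul_le_mul_right (closure_mul_le _ _) _).trans (mul_closure_le _ _)
      _ ≤ closure (interp C) := closure_mono (by simpa [mul_assoc] using ih)
      _ ≤ interp C := closure_interp_le C

theorem singleton_mem_interp_and_derL_of_mem (A : Tp) :
    [A] ∈ interp A ∧ ∀ Γ ∈ interp A, DerL Γ A := by
  induction A with
  | pr n => exact ⟨DerL.ax _, fun Γ h => h⟩
  | mul A B ihA ihB =>
    refine ⟨⟨by simp, fun Δ₁ Δ₂ C hC => ?_⟩, fun Γ h => ?_⟩
    · have hAB := hC _ (Language.append_mem_mul ihA.1 ihB.1)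
      simpa using DerL.mul_l (Γ := Δ₁) (Δ := Δ₂) (by simpa using hAB)
    · have hAB : ∀ Γ' ∈ interp A * interp B, DerL ([] ++ Γ' ++ []) (Tp.mul A B) := by
        rintro _ ⟨Γ₁, h₁, Γ₂, h₂, rfl⟩
        simpa using DerL.mul_r (ihA.2 _ h₁) (ihB.2 _ h₂)
      simpa using h.2 [] [] (Tp.mul A B) hAB
  | ldiv A B ihA ihB =>
    refine ⟨⟨by simp, fun Δ hΔ => closure_interp_le B ⟨by simp, fun Δ₁ Δ₂ C hC => ?_⟩⟩,
      fun Γ h => DerL.ldiv_r h.1 (ihB.2 _ (h.2 _ ihA.1))⟩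
    simpa using DerL.ldiv_l (Γ := Δ₁) (Δ := Δ₂) (ihA.2 _ hΔ) (by simpa using hC _ ihB.1)
  | rdiv B A ihB ihA =>
    refine ⟨⟨by simp, fun Δ hΔ => closure_interp_le B ⟨by simp, fun Δ₁ Δ₂ C hC => ?_⟩⟩,
      fun Γ h => DerL.rdiv_r h.1 (ihB.2 _ (h.2 _ ihA.1))⟩
    simpa using DerL.rdiv_l (Γ := Δ₁) (Δ := Δ₂) (ihA.2 _ hΔ) (by simpa using hC _ ihB.1)

theorem mem_prod_interp (Γ : List Tp) : Γ ∈ (Γ.map interp).prod := by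
  induction Γ with
  | nil => exact Language.nil_mem_one
  | cons A Γ ih =>
    exact Language.append_mem_mul (singleton_mem_interp_and_derL_of_mem A).1 ih

theorem cut {P Γ Δ : List Tp} {A C : Tp} (h₁ : DerL P A) (h₂ : DerL (Γ ++ A :: Δ) C) :
    DerL (Γ ++ P ++ Δ) C := by
  have hmem : Γ ++ P ++ Δ ∈ ((Γ ++ A :: Δ).map interp).prod := by
    simpa using Language.append_mem_mul (mem_prod_interp Γ)
      (Language.append_mem_mul (prod_interp_le h₁ (mem_prod_interp P)) (mem_prod_interp Δ))
  exact (singleton_mem_interp_and_derL_of_mem C).2 _ (prod_interp_le h₂ hmem)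

end DerL

/-! ### Types preordered by derivability -/

instance : Preorder Tp where
  le A B := DerL [A] B
  le_refl A := DerL.ax A
  le_trans A B C h₁ h₂ := by simpa using DerL.cut (Γ := []) (Δ := []) h₁ h₂

theorem DerL.trans_le {Γ : List Tp} {A B : Tp} (h : DerL Γ A) (hAB : A ≤ B) : DerL Γ B := by
  simpa using DerL.cut (Γ := []) (Δ := []) h hAB

namespace Tp

theorem derL_pair_iff {A B C : Tp} : DerL [A, B] C ↔ mul A B ≤ C :=
  ⟨fun h => DerL.mul_l (Γ := []) (Δ := []) h,
    fun h => (DerL.mul_r (DerL.ax A) (DerL.ax B)).trans_le h⟩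

theorem mul_le_mul {A A' B B' : Tp} (hA : A ≤ A') (hB : B ≤ B') : mul A B ≤ mul A' B' :=
  derL_pair_iff.1 (DerL.mul_r (Γ := [A]) (Δ := [B]) hA hB)

theorem mul_assoc_le (A B C : Tp) : mul (mul A B) C ≤ mul A (mul B C) :=
  derL_pair_iff.1 (DerL.mul_l (Γ := []) (Δ := [C])
    (DerL.mul_r (Γ := [A]) (DerL.ax A) (DerL.mul_r (Γ := [B]) (DerL.ax B) (DerL.ax C))))

theorem le_mul_assoc (A B C : Tp) : mul A (mul B C) ≤ mul (mul A B) C :=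
  derL_pair_iff.1 (DerL.mul_l (Γ := [A]) (Δ := [])
    (DerL.mul_r (Γ := [A, B]) (DerL.mul_r (Γ := [A]) (DerL.ax A) (DerL.ax B)) (DerL.ax C)))

theorem rdiv_mul_le (A B : Tp) : mul (rdiv B A) A ≤ B :=
  derL_pair_iff.1 (DerL.rdiv_l (Γ := []) (Δ := []) (DerL.ax A) (DerL.ax B))

theorem mul_ldiv_le (A B : Tp) : mul A (ldiv A B) ≤ B :=
  derL_pair_iff.1 (DerL.ldiv_l (Γ := []) (Δ := []) (DerL.ax A) (DerL.ax B))

theorem le_rdiv_iff {A B C : Tp} : A ≤ rdiv C B ↔ mul A B ≤ C :=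
  ⟨fun h => (mul_le_mul h le_rfl).trans (rdiv_mul_le B C),
    fun h => DerL.rdiv_r (by simp) (derL_pair_iff.2 h)⟩

theorem le_ldiv_iff {A B C : Tp} : B ≤ ldiv A C ↔ mul A B ≤ C :=
  ⟨fun h => (mul_le_mul le_rfl h).trans (mul_ldiv_le A C),
    fun h => DerL.ldiv_r (by simp) (derL_pair_iff.2 h)⟩

theorem rdiv_le_rdiv_left {A A' : Tp} (h : A' ≤ A) (B : Tp) : rdiv B A ≤ rdiv B A' :=
  le_rdiv_iff.2 ((mul_le_mul le_rfl h).trans (rdiv_mul_le A B))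

theorem ldiv_le_ldiv_left {A A' : Tp} (h : A' ≤ A) (B : Tp) : ldiv A B ≤ ldiv A' B :=
  le_ldiv_iff.2 ((mul_le_mul h le_rfl).trans (mul_ldiv_le A B))

theorem rdiv_mul_left_mul_le (A B C : Tp) : mul (rdiv C (mul A B)) A ≤ rdiv C B :=
  le_rdiv_iff.2 ((mul_assoc_le _ _ _).trans (rdiv_mul_le _ _))

theorem iterate_mul_mono (A : Tp) (n : ℕ) : Monotone (mul A)^[n] :=
  Monotone.iterate (fun _ _ h => mul_le_mul le_rfl h) n

theorem iterate_mul_mul_le (A : Tp) (n : ℕ) (X Z : Tp) :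
    (mul A)^[n] (mul X Z) ≤ mul ((mul A)^[n] X) Z := by
  induction n generalizing X with
  | zero => exact le_rfl
  | succ n ih => exact (iterate_mul_mono A n (le_mul_assoc _ _ _)).trans (ih (mul A X))

theorem iterate_rdiv_self_le (A : Tp) (n : ℕ) : (mul (rdiv A A))^[n] A ≤ A := by
  induction n with
  | zero => exact le_rfl
  | succ n ih => exact (iterate_mul_mono _ n (rdiv_mul_le A A)).trans ih

theorem rdiv_self_mul_rdiv_self_le (A : Tp) : mul (rdiv A A) (rdiv A A) ≤ rdiv A A :=
  le_rdiv_iff.2 ((mul_assoc_le _ _ _).trans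
    ((mul_le_mul le_rfl (rdiv_mul_le A A)).trans (rdiv_mul_le A A)))

theorem iterate_rdiv_self_anti (A X : Tp) {i j : ℕ} (hi : 1 ≤ i) (hij : i ≤ j) :
    (mul (rdiv A A))^[j] X ≤ (mul (rdiv A A))^[i] X := by
  induction j, hij using Nat.le_induction with
  | base => exact le_rfl
  | succ j hij ih =>
    obtain ⟨k, rfl⟩ := Nat.exists_eq_add_of_le' (hi.trans hij)
    refine (iterate_mul_mono _ k ?_).trans ih
    exact (le_mul_assoc _ _ _).trans (mul_le_mul (rdiv_self_mul_rdiv_self_le A) le_rfl)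

theorem rdiv_iterate_mul_mul_le (A C : Tp) (n : ℕ) (X Y : Tp) :
    mul (rdiv C ((mul A)^[n] X)) ((mul A)^[n] Y) ≤ mul (rdiv C X) Y := by
  induction n generalizing X Y with
  | zero => exact le_rfl
  | succ n ih =>
    exact (ih (mul A X) (mul A Y)).trans
      ((le_mul_assoc _ _ _).trans (mul_le_mul (rdiv_mul_left_mul_le A X C) le_rfl))

/-- The conjoining type of `P` and `Q`, an upper bound of types with the common lower bound `D`;
`j` is an arbitrary type. -/
def join (j D P Q : Tp) : Tp :=
  rdiv j (mul (rdiv (ldiv P j) (ldiv D j)) (mul (ldiv D j) (ldiv (ldiv D j) (ldiv Q j))))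

variable {D P Q : Tp}

theorem left_le_join (j : Tp) (hQ : D ≤ Q) : P ≤ join j D P Q := by
  refine le_rdiv_iff.2 (le_ldiv_iff.1 ?_)
  calc mul (rdiv (ldiv P j) (ldiv D j)) (mul (ldiv D j) (ldiv (ldiv D j) (ldiv Q j)))
      ≤ mul (rdiv (ldiv P j) (ldiv D j)) (ldiv Q j) := mul_le_mul le_rfl (mul_ldiv_le _ _)
    _ ≤ mul (rdiv (ldiv P j) (ldiv D j)) (ldiv D j) := mul_le_mul le_rfl (ldiv_le_ldiv_left hQ j)
    _ ≤ ldiv P j := rdiv_mul_le _ _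

theorem right_le_join (j : Tp) (hP : D ≤ P) : Q ≤ join j D P Q := by
  refine le_rdiv_iff.2 (le_ldiv_iff.1 ?_)
  calc mul (rdiv (ldiv P j) (ldiv D j)) (mul (ldiv D j) (ldiv (ldiv D j) (ldiv Q j)))
      ≤ mul (mul (rdiv (ldiv P j) (ldiv D j)) (ldiv D j)) (ldiv (ldiv D j) (ldiv Q j)) :=
        le_mul_assoc _ _ _
    _ ≤ mul (ldiv P j) (ldiv (ldiv D j) (ldiv Q j)) := mul_le_mul (rdiv_mul_le _ _) le_rfl
    _ ≤ mul (ldiv D j) (ldiv (ldiv D j) (ldiv Q j)) := mul_le_mul (ldiv_le_ldiv_left hP j) le_rfl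
    _ ≤ ldiv Q j := mul_ldiv_le _ _

end Tp

/-! ### One-state pushdown automata -/

/-- A one-state realtime pushdown automaton with input alphabet `α` and stack alphabet `Γ`:
reading the letter `a`, it may use any `(g, β) ∈ M a` to replace the stack symbol `g` on the top by
`β`. -/
abbrev PDA (α Γ : Type*) := α → List (Γ × List Γ)

namespace PDA

variable {α Γ Γ' : Type*}

/-- Acceptance by empty stack; stacks are listed from the top. -/
inductive Accepts (M : PDA α Γ) : List α → List Γ → Prop
  | nil : Accepts M [] []
  | cons {a : α} {w : List α} {g : Γ} {β γ : List Γ} :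
      (g, β) ∈ M a → Accepts M w (β ++ γ) → Accepts M (a :: w) (g :: γ)

/-- All stack symbols in the transitions of `M` lie in `S`. -/
def SymbolsIn (M : PDA α Γ) (S : Set Γ) : Prop := ∀ a, ∀ r ∈ M a, ∀ g ∈ r.1 :: r.2, g ∈ S

/-- The automaton with renamed stack symbols. -/
def map (M : PDA α Γ) (f : Γ → Γ') : PDA α Γ' :=
  fun a => (M a).map fun r => (f r.1, r.2.map f)

variable {M : PDA α Γ} {S : Set Γ} {f : Γ → Γ'}

theorem SymbolsIn.append_mem (hM : M.SymbolsIn S) {a : α} {g : Γ} {β γ : List Γ}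
    (h : (g, β) ∈ M a) (hγ : ∀ x ∈ γ, x ∈ S) : ∀ x ∈ β ++ γ, x ∈ S := by
  simp only [List.mem_append, or_imp, forall_and]
  exact ⟨fun x hx => hM a _ h x (List.mem_cons_of_mem _ hx), hγ⟩

theorem Accepts.append {w w' : List α} {γ γ' : List Γ} (h : M.Accepts w γ)
    (h' : M.Accepts w' γ') : M.Accepts (w ++ w') (γ ++ γ') := by
  induction h with
  | nil => exact h'
  | cons hr _ ih => exact .cons hr (by simpa using ih)

theorem Accepts.map {w : List α} {γ : List Γ} (h : M.Accepts w γ) (f : Γ → Γ') :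
    (M.map f).Accepts w (γ.map f) := by
  induction h with
  | nil => exact .nil
  | cons hr _ ih => exact .cons (List.mem_map_of_mem hr) (by simpa using ih)

theorem Accepts.of_map (hf : S.InjOn f) (hM : M.SymbolsIn S) {w : List α} {γ : List Γ}
    (hγ : ∀ g ∈ γ, g ∈ S) (h : (M.map f).Accepts w (γ.map f)) : M.Accepts w γ := by
  induction w generalizing γ with
  | nil =>
    cases γ with
    | nil => exact .nil
    | cons g γ => cases h
  | cons a w ih =>
    cases γ with
    | nil => cases h
    | cons g γ =>
      obtain ⟨hg, hγ'⟩ := List.forall_mem_cons.1 hγ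
      cases h with
      | cons hr h =>
        obtain ⟨⟨g', β⟩, hr', heq⟩ := List.mem_map.1 hr
        obtain ⟨hg', rfl⟩ := Prod.ext_iff.1 heq
        obtain rfl : g' = g := hf (hM a _ hr' _ List.mem_cons_self) hg hg'
        exact .cons hr' (ih (hM.append_mem hr' hγ') (by simpa using h))

theorem accepts_map_iff (hf : S.InjOn f) (hM : M.SymbolsIn S) {w : List α} {γ : List Γ}
    (hγ : ∀ g ∈ γ, g ∈ S) : (M.map f).Accepts w (γ.map f) ↔ M.Accepts w γ :=
  ⟨.of_map hf hM hγ, fun h => h.map f⟩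

end PDA

/-! ### The types of the construction -/

/-- The primitive types of the construction: acceptance, the bottom mark of the stack, the two bits
by which stack symbols are coded, and the auxiliary primitive of the joins. -/
inductive Atom
  | accept | mark | bit (b : Bool) | join

/-- The primitive type with a given role. -/
def Atom.tp : Atom → Tp
  | accept => Tp.pr 0
  | mark => Tp.pr 1
  | bit false => Tp.pr 2
  | bit true => Tp.pr 3
  | join => Tp.pr 4

/-- The role of the `n`-th primitive type; those without a role count as `join`. -/
def Atom.ofNat : ℕ → Atom
  | 0 => accept
  | 1 => mark
  | 2 => bit false
  | 3 => bit true
  | _ => join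

namespace StackTypes

open Tp Atom

/-- The type coding an occurrence of the bit `b` on the stack. Since it absorbs copies of itself, it
stands for one or more occurrences. -/
def bitTp (b : Bool) : Tp := rdiv (bit b).tp (bit b).tp

/-- The code of the stack symbol `g ≤ m`, namely `g + 1` bits `false` on top of which lie
`m - g + 1` bits `true`; since types are read from the bottom of the stack, the top comes last. -/
def block (m g : ℕ) (X : Tp) : Tp :=
  (mul (bitTp false))^[g + 1] ((mul (bitTp true))^[m - g + 1] X)

/-- The code of the stack `γ`, put in front of `X`. -/
def stackTp (m : ℕ) (γ : List ℕ) (X : Tp) : Tp := γ.foldl (fun X g => block m g X) X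

/-- The end of the code of a stack. Each of the `n` iterations allows one more block in front of it
to be absorbed, so that the codes of up to `n` symbols lie below the type of the bit `false`. -/
def bottom (n : ℕ) : Tp :=
  (fun X => mul (mul X (ldiv (bit false).tp (bit true).tp)) (ldiv (bit true).tp (bit false).tp))^[n]
    (mul (mul mark.tp (ldiv mark.tp (bit true).tp)) (ldiv (bit true).tp (bit false).tp))

/-- The type of the words accepted from the stack with code `X`. -/
def acceptTp (X : Tp) : Tp := rdiv accept.tp X

/-- The type of the transition replacing the top symbol `r.1` of the stack by `r.2`. -/
def ruleTp (m N : ℕ) (r : ℕ × List ℕ) : Tp :=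
  mul (acceptTp (stackTp m r.2 (bottom N))) (block m r.1 (bottom N))

/-- A common lower bound of the types of all transitions with symbols up to `m` which push at most
`N` symbols. -/
def lowerTp (m N : ℕ) : Tp :=
  mul (acceptTp (bit false).tp)
    ((mul (bitTp false))^[m + 1] ((mul (bitTp true))^[m + 1] (bottom N)))

/-- The join of the types of the listed transitions. -/
def joinTp (m N : ℕ) (l : List (ℕ × List ℕ)) : Tp :=
  l.foldr (fun r U => Tp.join join.tp (lowerTp m N) U (ruleTp m N r)) (lowerTp m N)

/-- The type of a letter with the listed transitions. -/
def letterTp (m N : ℕ) (l : List (ℕ × List ℕ)) : Tp := acceptTp (joinTp m N l)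

/-- The type of the words accepted from the initial stack `[g]`. -/
def targetTp (m N g : ℕ) : Tp :=
  rdiv accept.tp (mul (acceptTp (bottom N)) (stackTp m [g] (bottom N)))

/-! ### Accepted words give derivable sequents -/

theorem block_mono (m g : ℕ) : Monotone (block m g) :=
  (iterate_mul_mono _ _).comp (iterate_mul_mono _ _)

theorem block_mul_le (m g : ℕ) (X Z : Tp) : block m g (mul X Z) ≤ mul (block m g X) Z :=
  (iterate_mul_mono _ _ (iterate_mul_mul_le _ _ X Z)).trans (iterate_mul_mul_le _ _ _ _)

theorem stackTp_append (m : ℕ) (β γ : List ℕ) (X : Tp) :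
    stackTp m (β ++ γ) X = stackTp m γ (stackTp m β X) := List.foldl_append

theorem stackTp_mono (m : ℕ) (γ : List ℕ) : Monotone (stackTp m γ) := by
  induction γ with
  | nil => exact monotone_id
  | cons g γ ih => exact ih.comp (block_mono m g)

theorem stackTp_mul_le (m : ℕ) (γ : List ℕ) (X Z : Tp) :
    stackTp m γ (mul X Z) ≤ mul (stackTp m γ X) Z := by
  induction γ generalizing X with
  | nil => exact le_rfl
  | cons g γ ih => exact (stackTp_mono m γ (block_mul_le m g X Z)).trans (ih _)

theorem bottom_succ (n : ℕ) :
    bottom (n + 1) = mul (mul (bottom n) (ldiv (bit false).tp (bit true).tp))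
      (ldiv (bit true).tp (bit false).tp) :=
  Function.iterate_succ_apply' _ _ _

theorem mul_mul_ldiv_le {A B C X : Tp} (h : X ≤ A) : mul (mul X (ldiv A B)) (ldiv B C) ≤ C :=
  (mul_le_mul ((mul_le_mul h le_rfl).trans (mul_ldiv_le A B)) le_rfl).trans (mul_ldiv_le B C)

theorem bottom_le (n : ℕ) : bottom n ≤ (bit false).tp := by
  cases n with
  | zero => exact mul_mul_ldiv_le le_rfl
  | succ n => rw [bottom_succ]; exact mul_mul_ldiv_le (bottom_le n)

theorem block_mul_ldiv_le (m g : ℕ) :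
    block m g (mul (bit true).tp (ldiv (bit true).tp (bit false).tp)) ≤ (bit false).tp := by
  refine (iterate_mul_mono _ _ ?_).trans (iterate_rdiv_self_le _ _)
  exact (iterate_mul_mul_le _ _ _ _).trans
    ((mul_le_mul (iterate_rdiv_self_le _ _) le_rfl).trans (mul_ldiv_le _ _))

theorem stackTp_bottom_le (m : ℕ) {β : List ℕ} {n : ℕ} (h : β.length ≤ n) :
    stackTp m β (bottom n) ≤ (bit false).tp := by
  induction β using List.reverseRecOn generalizing n with
  | nil => exact bottom_le n
  | append_singleton β g ih =>
    rw [List.length_append, List.length_singleton] at h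
    obtain ⟨n, rfl⟩ := Nat.exists_eq_add_of_le' ((Nat.le_add_left 1 _).trans h)
    rw [stackTp_append, bottom_succ]
    refine (block_mono m g ?_).trans (block_mul_ldiv_le m g)
    refine (stackTp_mul_le m β _ _).trans (mul_le_mul ?_ le_rfl)
    exact (stackTp_mul_le m β _ _).trans
      ((mul_le_mul (ih (Nat.le_of_succ_le_succ h)) le_rfl).trans (mul_ldiv_le _ _))

theorem acceptTp_stackTp_mul_le (m : ℕ) (γ : List ℕ) (X Y : Tp) :
    mul (acceptTp (stackTp m γ X)) (stackTp m γ Y) ≤ mul (acceptTp X) Y := by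
  induction γ generalizing X Y with
  | nil => exact le_rfl
  | cons g γ ih =>
    exact (ih (block m g X) (block m g Y)).trans
      ((rdiv_iterate_mul_mul_le _ _ _ _ _).trans (rdiv_iterate_mul_mul_le _ _ _ _ _))

theorem iterate_bitTp_le_block {m g : ℕ} (hg : g ≤ m) (X : Tp) :
    (mul (bitTp false))^[m + 1] ((mul (bitTp true))^[m + 1] X) ≤ block m g X :=
  (iterate_rdiv_self_anti _ _ (by lia) (by lia)).trans
    (iterate_mul_mono _ _ (iterate_rdiv_self_anti _ _ (by lia) (by lia)))

theorem lowerTp_le_ruleTp {m N : ℕ} {r : ℕ × List ℕ} (hm : r.1 ≤ m) (hN : r.2.length ≤ N) :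
    lowerTp m N ≤ ruleTp m N r :=
  mul_le_mul (rdiv_le_rdiv_left (stackTp_bottom_le m hN) _) (iterate_bitTp_le_block hm _)

theorem lowerTp_le_joinTp {m N : ℕ} {l : List (ℕ × List ℕ)}
    (hl : ∀ r ∈ l, r.1 ≤ m ∧ r.2.length ≤ N) : lowerTp m N ≤ joinTp m N l := by
  induction l with
  | nil => exact le_rfl
  | cons r l ih =>
    obtain ⟨hr, hl⟩ := List.forall_mem_cons.1 hl
    exact (ih hl).trans (left_le_join _ (lowerTp_le_ruleTp hr.1 hr.2))

theorem ruleTp_le_joinTp {m N : ℕ} {l : List (ℕ × List ℕ)}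
    (hl : ∀ r ∈ l, r.1 ≤ m ∧ r.2.length ≤ N) {r : ℕ × List ℕ} (hr : r ∈ l) :
    ruleTp m N r ≤ joinTp m N l := by
  induction l with
  | nil => cases hr
  | cons s l ih =>
    obtain ⟨hs, hl'⟩ := List.forall_mem_cons.1 hl
    rcases List.mem_cons.1 hr with rfl | hr
    · exact right_le_join _ (lowerTp_le_joinTp hl')
    · exact (ih hl' hr).trans (left_le_join _ (lowerTp_le_ruleTp hs.1 hs.2))

section Syntactic

variable {α : Type*} {M : PDA α ℕ} {m N : ℕ} {w : List α}

theorem derL_acceptTp_of_accepts (hM : ∀ a, ∀ r ∈ M a, r.1 ≤ m ∧ r.2.length ≤ N) {γ : List ℕ}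
    (h : M.Accepts w γ) :
    DerL (w.map (fun a => letterTp m N (M a)) ++ [acceptTp (bottom N)])
      (acceptTp (stackTp m γ (bottom N))) := by
  induction h with
  | nil => exact DerL.ax _
  | @cons a w g β γ hr _ ih =>
    rw [stackTp_append] at ih
    have hrule : mul (acceptTp (stackTp m γ (stackTp m β (bottom N))))
        (stackTp m (g :: γ) (bottom N)) ≤ joinTp m N (M a) :=
      (acceptTp_stackTp_mul_le m γ _ _).trans (ruleTp_le_joinTp (hM a) hr)
    have hjoin := (DerL.mul_r ih (DerL.ax (stackTp m (g :: γ) (bottom N)))).trans_le hrule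
    refine DerL.rdiv_r (by simp) ?_
    simpa [letterTp, acceptTp] using
      DerL.rdiv_l (Γ := []) (Δ := []) hjoin (DerL.ax accept.tp)

theorem derL_targetTp_of_accepts (hM : ∀ a, ∀ r ∈ M a, r.1 ≤ m ∧ r.2.length ≤ N) {g : ℕ}
    (h : M.Accepts w [g]) : DerL (w.map fun a => letterTp m N (M a)) (targetTp m N g) := by
  have hw : w ≠ [] := by rintro rfl; cases h
  have hstack := DerL.mul_r (derL_acceptTp_of_accepts hM h) (DerL.ax (stackTp m [g] (bottom N)))
  refine DerL.rdiv_r (by simpa using hw) (DerL.mul_l (Δ := []) ?_)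
  simpa using hstack.trans_le (rdiv_mul_le _ _)

end Syntactic

end StackTypes

/-! ### Relational semantics -/

namespace Tp

variable {V : Type*} (W : V → V → Prop) (v : ℕ → V → V → Prop)

/-- The interpretation of a type as a binary relation; the divisions are taken inside `W`. -/
def den : Tp → V → V → Prop
  | pr n, p, q => v n p q
  | mul A B, p, q => ∃ o, den A p o ∧ den B o q
  | ldiv A B, p, q => W p q ∧ ∀ o, den A o p → den B o q
  | rdiv B A, p, q => W p q ∧ ∀ o, den A q o → den B p o

/-- The composition of the interpretations of the listed types. -/
def denList : List Tp → V → V → Prop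
  | [], p, q => p = q
  | A :: Γ, p, q => ∃ o, den W v A p o ∧ denList Γ o q

variable {W v}

theorem denList_append {Γ Δ : List Tp} {p q : V} :
    denList W v (Γ ++ Δ) p q ↔ ∃ o, denList W v Γ p o ∧ denList W v Δ o q := by
  induction Γ generalizing p with
  | nil => simp [denList]
  | cons A Γ ih => simp only [List.cons_append, denList, ih]; grind

theorem den_le [IsTrans V W] (hv : ∀ n, v n ≤ W) (A : Tp) : den W v A ≤ W := by
  induction A with
  | pr n => exact hv n
  | mul A B ihA ihB => exact fun p q ⟨o, hA, hB⟩ => trans_of W (ihA p o hA) (ihB o q hB)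
  | ldiv A B => exact fun _ _ h => h.1
  | rdiv B A => exact fun _ _ h => h.1

theorem denList_le [IsTrans V W] (hv : ∀ n, v n ≤ W) {Γ : List Tp} (hΓ : Γ ≠ []) :
    denList W v Γ ≤ W := by
  induction Γ with
  | nil => exact absurd rfl hΓ
  | cons A Γ ih =>
    rintro p q ⟨o, hA, h⟩
    rcases eq_or_ne Γ [] with rfl | hne
    · exact h ▸ den_le hv A p o hA
    · exact trans_of W (den_le hv A p o hA) (ih hne o q h)

theorem denList_le_den_of_derL [IsTrans V W] (hv : ∀ n, v n ≤ W) {Γ : List Tp} {C : Tp}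
    (h : DerL Γ C) : denList W v Γ ≤ den W v C := by
  intro p q hpq
  induction h generalizing p q with
  | ax A => obtain ⟨o, h, rfl⟩ := hpq; exact h
  | ldiv_r hne _ ih => exact ⟨denList_le hv hne _ _ hpq, fun o ho => ih o q ⟨p, ho, hpq⟩⟩
  | ldiv_l _ _ ihA ihB =>
    obtain ⟨s, hΓP, t, hdiv, hΔ⟩ := denList_append.1 hpq
    obtain ⟨u, hΓ, hP⟩ := denList_append.1 hΓP
    exact ihB p q (denList_append.2 ⟨u, hΓ, t, hdiv.2 _ (ihA u s hP), hΔ⟩)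
  | rdiv_r hne _ ih =>
    exact ⟨denList_le hv hne _ _ hpq, fun o ho =>
      ih p o (denList_append.2 ⟨q, hpq, o, ho, rfl⟩)⟩
  | rdiv_l _ _ ihA ihB =>
    obtain ⟨s, hΓ, t, hdiv, hPΔ⟩ := denList_append.1 hpq
    obtain ⟨u, hP, hΔ⟩ := denList_append.1 hPΔ
    exact ihB p q (denList_append.2 ⟨s, hΓ, u, hdiv.2 _ (ihA t u hP), hΔ⟩)
  | mul_r _ _ ihA ihB =>
    obtain ⟨o, hΓ, hΔ⟩ := denList_append.1 hpq
    exact ⟨o, ihA p o hΓ, ihB o q hΔ⟩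
  | mul_l _ ih =>
    obtain ⟨s, hΓ, t, ⟨u, hA, hB⟩, hΔ⟩ := denList_append.1 hpq
    exact ih p q (denList_append.2 ⟨s, hΓ, u, hA, t, hB, hΔ⟩)

end Tp

/-! ### Derivable sequents give accepted words -/

namespace StackTypes

open Tp Atom

/-- The binary code of a stack. -/
def encodeStack (m : ℕ) : List ℕ → List Bool
  | [] => []
  | g :: γ => List.replicate (m - g + 1) true ++ (List.replicate (g + 1) false ++ encodeStack m γ)

/-- One of the listed transitions leads from the binary stack `σ` to `σ'`. As the types of the bits
stand for one or more occurrences, the code of the symbol removed may be longer than necessary. -/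
def BinStep (m : ℕ) (l : List (ℕ × List ℕ)) (σ σ' : List Bool) : Prop :=
  ∃ r ∈ l, ∃ i j ρ, r.1 + 1 ≤ i ∧ m - r.1 + 1 ≤ j ∧
    σ = List.replicate j true ++ (List.replicate i false ++ ρ) ∧ σ' = encodeStack m r.2 ++ ρ

/-- Acceptance by empty binary stack. -/
def BinAccepts {α : Type*} (M : PDA α ℕ) (m : ℕ) : List α → List Bool → Prop
  | [], σ => σ = []
  | a :: w, σ => ∃ σ', BinStep m (M a) σ σ' ∧ BinAccepts M m w σ'

theorem BinStep.mono {m : ℕ} {l l' : List (ℕ × List ℕ)} (hl : l ⊆ l') {σ σ' : List Bool}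
    (h : BinStep m l σ σ') : BinStep m l' σ σ' := by
  obtain ⟨r, hr, h⟩ := h
  exact ⟨r, hl hr, h⟩

theorem not_binStep_nil (m : ℕ) (l : List (ℕ × List ℕ)) (σ : List Bool) : ¬ BinStep m l [] σ := by
  rintro ⟨r, -, i, j, ρ, hi, -, h, -⟩
  replace h := congrArg List.length h
  simp at h
  lia

theorem not_binStep_false_cons (m : ℕ) (l : List (ℕ × List ℕ)) (σ σ' : List Bool) :
    ¬ BinStep m l (false :: σ) σ' := by
  rintro ⟨r, -, i, j, ρ, -, hj, h, -⟩
  obtain ⟨j, rfl⟩ := Nat.exists_eq_add_of_le' ((Nat.le_add_left 1 _).trans hj)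
  simp [List.replicate_succ] at h

theorem not_binAccepts_false_cons {α : Type*} (M : PDA α ℕ) (m : ℕ) (w : List α)
    (σ : List Bool) : ¬ BinAccepts M m w (false :: σ) := by
  cases w with
  | nil => exact List.cons_ne_nil _ _
  | cons a w => rintro ⟨σ', h, -⟩; exact not_binStep_false_cons _ _ _ _ h

theorem replicate_append_cons_inj {α : Type*} {a b : α} (hab : a ≠ b) {i j : ℕ} {σ τ : List α}
    (h : List.replicate i a ++ b :: σ = List.replicate j a ++ b :: τ) : i = j ∧ σ = τ := by
  induction i generalizing j with
  | zero => cases j <;> simp_all [List.replicate_succ]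
  | succ i ih =>
    cases j with
    | zero => simp_all [List.replicate_succ]
    | succ j => simpa using ih (by simpa [List.replicate_succ] using h)

theorem encodeStack_ne_false_cons (m : ℕ) (γ : List ℕ) (σ : List Bool) :
    encodeStack m γ ≠ false :: σ := by
  cases γ <;> simp [encodeStack, List.replicate_succ]

theorem encodeStack_append (m : ℕ) (β γ : List ℕ) :
    encodeStack m (β ++ γ) = encodeStack m β ++ encodeStack m γ := by
  induction β with
  | nil => rfl
  | cons g β ih => simp [encodeStack, ih]

/-- The two lengths of a code have a constant sum, so no code extends that of another symbol. -/
theorem encodeStack_cons_eq {m g h i j : ℕ} (hg : g ≤ m) (hh : h ≤ m) {γ : List ℕ}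
    {σ : List Bool} (hi : g + 1 ≤ i) (hj : m - g + 1 ≤ j)
    (heq : encodeStack m (h :: γ) = List.replicate j true ++ (List.replicate i false ++ σ)) :
    h = g ∧ σ = encodeStack m γ := by
  obtain ⟨i, rfl⟩ := Nat.exists_eq_add_of_le' ((Nat.le_add_left 1 _).trans hi)
  simp only [encodeStack, List.replicate_succ (n := h), List.replicate_succ (n := i),
    List.cons_append] at heq
  obtain ⟨htrue, hfalse⟩ := replicate_append_cons_inj (by simp) heq
  obtain ⟨k, rfl⟩ := Nat.exists_eq_add_of_le (show h ≤ i by lia)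
  rw [List.replicate_add, List.append_assoc, List.append_cancel_left_eq] at hfalse
  cases k with
  | zero => exact ⟨by lia, by simpa using hfalse.symm⟩
  | succ k =>
    exact absurd hfalse (by simpa [List.replicate_succ] using encodeStack_ne_false_cons m γ _)

theorem accepts_of_binAccepts {α : Type*} {M : PDA α ℕ} {m : ℕ} (hM : M.SymbolsIn (Set.Iic m))
    {w : List α} {γ : List ℕ} (hγ : ∀ g ∈ γ, g ∈ Set.Iic m)
    (h : BinAccepts M m w (encodeStack m γ)) : M.Accepts w γ := by
  induction w generalizing γ with
  | nil =>
    cases γ with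
    | nil => exact .nil
    | cons g γ => simp [BinAccepts, encodeStack] at h
  | cons a w ih =>
    obtain ⟨σ', hstep, h⟩ := h
    cases γ with
    | nil => exact absurd hstep (not_binStep_nil _ _ _)
    | cons g γ =>
      obtain ⟨hg, hγ'⟩ := List.forall_mem_cons.1 hγ
      obtain ⟨r, hr, i, j, ρ, hi, hj, heq, rfl⟩ := hstep
      obtain ⟨rfl, rfl⟩ := encodeStack_cons_eq (hM a r hr _ List.mem_cons_self) hg hi hj heq
      rw [← encodeStack_append] at h
      exact .cons hr (ih (hM.append_mem hr hγ') h)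

/-- The points of the relational model: remaining inputs, stacks being built, finished stacks,
witnesses for the content of a stack, and tests of a finished stack against some transitions. -/
inductive Point (α : Type*) : Type _
  | inp (w : List α)
  | stk (σ : List Bool)
  | fin (σ : List Bool)
  | wit (σ : List Bool)
  | test (l : List (ℕ × List ℕ)) (σ : List Bool)

namespace Point

variable {α : Type*}

/-- The transitive relation inside which the types are interpreted. -/
inductive Before : Point α → Point α → Prop
  | inp (w : List α) (q : Point α) : Before (inp w) q
  | stk_stk {σ τ : List Bool} : τ ≠ [] → Before (stk σ) (stk (τ ++ σ))
  | stk_fin (σ τ : List Bool) : Before (stk σ) (fin τ)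
  | stk_wit (σ τ : List Bool) : Before (stk σ) (wit τ)
  | stk_test (l : List (ℕ × List ℕ)) (σ τ : List Bool) : Before (stk σ) (test l τ)
  | fin_fin (σ : List Bool) : Before (fin σ) (fin σ)
  | fin_test (l : List (ℕ × List ℕ)) (σ : List Bool) : Before (fin σ) (test l σ)
  | test_test (l : List (ℕ × List ℕ)) (σ : List Bool) : Before (test l σ) (test l σ)

instance : IsTrans (Point α) Before where
  trans _ _ _ h₁ h₂ := by
    cases h₁ with
    | stk_stk hτ =>
      cases h₂ with
      | stk_stk => rw [← List.append_assoc]; exact .stk_stk (by simp [hτ])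
      | _ => constructor
    | _ => cases h₂ <;> constructor

variable (M : PDA α ℕ) (m : ℕ)

/-- The relations assigned to the primitive types. -/
inductive Val : Atom → Point α → Point α → Prop
  | accept {w : List α} {q : Point α} :
      (∀ σ, q = fin σ → BinAccepts M m w σ) → Val accept (inp w) q
  | mark (σ : List Bool) : Val mark (stk σ) (fin σ)
  | bit_fin (b : Bool) (σ τ : List Bool) : Val (bit b) (stk σ) (fin (τ ++ σ))
  | bit_wit (b : Bool) (σ : List Bool) (n : ℕ) :
      Val (bit b) (stk σ) (wit (List.replicate n b ++ σ))
  | join {l : List (ℕ × List ℕ)} {w : List α} {σ σ' : List Bool} :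
      BinStep m l σ σ' → BinAccepts M m w σ' → Val join (inp w) (test l σ)

theorem Val.le_before (a : Atom) : Val M m a ≤ Before := by
  intro p q h
  cases h <;> constructor

end Point

open Point

/-- The interpretation of a type in the model given by the automaton `M`. -/
abbrev Den {α : Type*} (M : PDA α ℕ) (m : ℕ) : Tp → Point α → Point α → Prop :=
  den Before fun n => Val M m (.ofNat n)

section Model

variable {α : Type*} {M : PDA α ℕ} {m : ℕ} {p q : Point α}

theorem den_tp {a : Atom} : Den M m a.tp p q ↔ Val M m a p q := by
  rcases a with _ | _ | (_ | _) | _ <;> rfl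

theorem den_bitTp {b : Bool} {σ' : List Bool} :
    Den M m (bitTp b) p (stk σ') ↔
      ∃ n σ, 1 ≤ n ∧ p = stk σ ∧ σ' = List.replicate n b ++ σ := by
  simp only [bitTp, den, den_tp]
  constructor
  · rintro ⟨hp, h⟩
    generalize hq : wit σ' = q at h
    cases h q (hq ▸ .bit_wit b σ' 0) with
    | bit_fin => cases hq
    | bit_wit _ σ n =>
      cases hq
      refine ⟨n, σ, Nat.one_le_iff_ne_zero.2 ?_, rfl, rfl⟩
      rintro rfl
      generalize hρ : List.replicate 0 b ++ σ = ρ at hp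
      cases hp with
      | stk_stk hτ => simp [hτ] at hρ
  · rintro ⟨n, σ, hn, rfl, rfl⟩
    refine ⟨.stk_stk (by simp; lia), fun o ho => ?_⟩
    cases ho with
    | bit_fin _ _ τ => rw [← List.append_assoc]; exact .bit_fin _ _ _
    | bit_wit _ _ k => rw [← List.append_assoc, ← List.replicate_add]; exact .bit_wit _ _ _

theorem den_iterate_bitTp {b : Bool} {X : Tp} (n : ℕ) {σ : List Bool}
    (h : Den M m X (stk (List.replicate n b ++ σ)) q) :
    Den M m ((mul (bitTp b))^[n] X) (stk σ) q := by
  induction n generalizing X with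
  | zero => exact h
  | succ n ih =>
    refine ih (X := mul (bitTp b) X) ⟨_, den_bitTp.2 ⟨1, _, le_rfl, rfl, rfl⟩, ?_⟩
    simpa [← List.append_assoc, List.replicate_succ] using h

theorem exists_of_den_iterate_bitTp {b : Bool} {X : Tp}
    (hX : ∀ p q, Den M m X p q → ∃ σ : List Bool, p = stk σ) (n : ℕ)
    (h : Den M m ((mul (bitTp b))^[n] X) p q) :
    ∃ i σ, n ≤ i ∧ p = stk σ ∧ Den M m X (stk (List.replicate i b ++ σ)) q := by
  induction n generalizing p with
  | zero =>
    obtain ⟨σ, rfl⟩ := hX p q h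
    exact ⟨0, σ, le_rfl, rfl, h⟩
  | succ n ih =>
    rw [Function.iterate_succ_apply'] at h
    obtain ⟨o, hb, h⟩ := h
    obtain ⟨i, σ', hi, rfl, h⟩ := ih h
    obtain ⟨k, σ, hk, rfl, rfl⟩ := den_bitTp.1 hb
    refine ⟨i + k, σ, by lia, rfl, ?_⟩
    rwa [List.replicate_add, List.append_assoc]

theorem den_ldiv_bit {a : Atom} {b : Bool} {σ : List Bool} (ha : Val M m a (stk σ) (fin σ))
    (hab : ∀ o, Val M m a o (fin σ) → Val M m (bit b) o (fin σ)) :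
    Den M m (ldiv a.tp (bit b).tp) (fin σ) q ↔ q = fin σ := by
  simp only [den, den_tp]
  constructor
  · rintro ⟨hq, h⟩
    cases hq with
    | fin_fin => rfl
    | fin_test => cases h _ ha
  · rintro rfl
    exact ⟨.fin_fin σ, hab⟩

theorem den_ldiv_mark {b : Bool} {σ : List Bool} :
    Den M m (ldiv mark.tp (bit b).tp) (fin σ) q ↔ q = fin σ :=
  den_ldiv_bit (.mark σ) fun o ho => by cases ho; exact .bit_fin b σ []

theorem den_ldiv_bit_bit {b c : Bool} {σ : List Bool} :
    Den M m (ldiv (bit c).tp (bit b).tp) (fin σ) q ↔ q = fin σ :=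
  den_ldiv_bit (.bit_fin c σ []) fun o ho => by cases ho; exact .bit_fin b _ _

theorem den_mul_fin {X Y : Tp}
    (hX : ∀ p q, Den M m X p q ↔ ∃ σ : List Bool, p = stk σ ∧ q = fin σ)
    (hY : ∀ (σ : List Bool) q, Den M m Y (fin σ) q ↔ q = fin σ) (p q : Point α) :
    Den M m (mul X Y) p q ↔ ∃ σ : List Bool, p = stk σ ∧ q = fin σ := by
  constructor
  · rintro ⟨o, ho, hq⟩
    obtain ⟨σ, rfl, rfl⟩ := (hX p o).1 ho
    exact ⟨σ, rfl, (hY σ q).1 hq⟩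
  · rintro ⟨σ, rfl, rfl⟩
    exact ⟨fin σ, (hX _ _).2 ⟨σ, rfl, rfl⟩, (hY σ _).2 rfl⟩

theorem den_bottom (n : ℕ) (p q : Point α) :
    Den M m (bottom n) p q ↔ ∃ σ : List Bool, p = stk σ ∧ q = fin σ := by
  induction n generalizing p q with
  | zero =>
    refine den_mul_fin (den_mul_fin (fun p q => ?_) fun _ _ => den_ldiv_mark)
      (fun _ _ => den_ldiv_bit_bit) p q
    rw [den_tp]
    exact ⟨fun h => by cases h; exact ⟨_, rfl, rfl⟩, by rintro ⟨σ, rfl, rfl⟩; exact .mark σ⟩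
  | succ n ih =>
    rw [bottom_succ]
    exact den_mul_fin (den_mul_fin ih fun _ _ => den_ldiv_bit_bit) (fun _ _ => den_ldiv_bit_bit) p q

theorem exists_of_den_iterate_bottom {i j n : ℕ}
    (h : Den M m ((mul (bitTp false))^[i] ((mul (bitTp true))^[j] (bottom n))) p q) :
    ∃ i' j' σ, i ≤ i' ∧ j ≤ j' ∧ p = stk σ ∧
      q = fin (List.replicate j' true ++ (List.replicate i' false ++ σ)) := by
  have hbottom : ∀ p q, Den M m (bottom n) p q → ∃ σ : List Bool, p = stk σ := fun p q h =>
    let ⟨σ, hp, _⟩ := (den_bottom n p q).1 h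
    ⟨σ, hp⟩
  obtain ⟨i', σ, hi, rfl, htrue⟩ := exists_of_den_iterate_bitTp (fun p q h =>
    let ⟨_, σ, _, hp, _⟩ := exists_of_den_iterate_bitTp hbottom j h
    ⟨σ, hp⟩) i h
  obtain ⟨j', _, hj, hσ, hend⟩ := exists_of_den_iterate_bitTp hbottom j htrue
  cases hσ
  obtain ⟨_, hρ, rfl⟩ := (den_bottom n _ _).1 hend
  cases hρ
  exact ⟨i', j', σ, hi, hj, rfl, rfl⟩

theorem den_stackTp {γ : List ℕ} {X : Tp} {σ : List Bool}
    (h : Den M m X (stk (encodeStack m γ ++ σ)) q) : Den M m (stackTp m γ X) (stk σ) q := by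
  induction γ generalizing X with
  | nil => exact h
  | cons g γ ih =>
    refine ih (X := block m g X) (den_iterate_bitTp _ (den_iterate_bitTp _ ?_))
    simpa [encodeStack] using h

theorem den_stackTp_bottom (γ : List ℕ) (n : ℕ) (σ : List Bool) :
    Den M m (stackTp m γ (bottom n)) (stk σ) (fin (encodeStack m γ ++ σ)) :=
  den_stackTp ((den_bottom _ _ _).2 ⟨_, rfl, rfl⟩)

theorem binAccepts_of_den_acceptTp {X : Tp} {σ : List Bool} (h : Den M m (acceptTp X) p q)
    (hX : Den M m X q (fin σ)) : ∃ w, p = inp w ∧ BinAccepts M m w σ := by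
  have haccept : Val M m accept p (fin σ) := h.2 _ hX
  cases haccept with
  | accept hw => exact ⟨_, rfl, hw σ rfl⟩

theorem binStep_of_den_ruleTp {N : ℕ} {r : ℕ × List ℕ} (h : Den M m (ruleTp m N r) p q) :
    ∃ w σ σ', p = inp w ∧ q = fin σ ∧ BinStep m [r] σ σ' ∧ BinAccepts M m w σ' := by
  obtain ⟨o, haccept, hblock⟩ := h
  obtain ⟨i, j, ρ, hi, hj, rfl, rfl⟩ := exists_of_den_iterate_bottom hblock
  obtain ⟨w, rfl, hw⟩ := binAccepts_of_den_acceptTp haccept (den_stackTp_bottom r.2 N ρ)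
  exact ⟨w, _, _, rfl, rfl, ⟨r, List.mem_singleton_self r, i, j, ρ, hi, hj, rfl, rfl⟩, hw⟩

theorem not_den_lowerTp {N : ℕ} : ¬ Den M m (lowerTp m N) p q := by
  rintro ⟨o, haccept, hstack⟩
  obtain ⟨i, j, σ, -, -, rfl, -⟩ := exists_of_den_iterate_bottom hstack
  obtain ⟨w, -, hw⟩ := binAccepts_of_den_acceptTp haccept
    (den_tp.2 (Val.bit_fin false σ [false]))
  exact not_binAccepts_false_cons M m w σ hw

/-- Since `lowerTp m N` is empty, the two divisions by `ldiv (lowerTp m N) join` in the definition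
of the join hold at `test (r :: l) σ`, where the relation of `join` admits the transitions in `l` as
well as `r`. -/
theorem binStep_of_den_joinTp {N : ℕ} {l : List (ℕ × List ℕ)} {σ : List Bool}
    (h : Den M m (joinTp m N l) p (fin σ)) :
    ∃ w σ', p = inp w ∧ BinStep m l σ σ' ∧ BinAccepts M m w σ' := by
  induction l generalizing p with
  | nil => exact absurd h not_den_lowerTp
  | cons r l ih =>
    have hlower : Den M m (ldiv (lowerTp m N) join.tp) (test (r :: l) σ) (test (r :: l) σ) :=
      ⟨.test_test _ _, fun o ho => absurd ho not_den_lowerTp⟩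
    have hleft : Den M m (ldiv (joinTp m N l) join.tp) (fin σ) (test (r :: l) σ) := by
      refine ⟨.fin_test _ _, fun o ho => den_tp.2 ?_⟩
      obtain ⟨w, σ', rfl, hstep, hw⟩ := ih ho
      exact .join (hstep.mono (List.subset_cons_self r l)) hw
    have hright {o : Point α} (ho : Before o (test (r :: l) σ)) :
        Den M m (ldiv (ruleTp m N r) join.tp) o (test (r :: l) σ) := by
      refine ⟨ho, fun o' ho' => den_tp.2 ?_⟩
      obtain ⟨w, ρ, σ', rfl, rfl, hstep, hw⟩ := binStep_of_den_ruleTp ho'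
      cases ho
      exact .join (hstep.mono (by simp)) hw
    have hjoin : Val M m join p (test (r :: l) σ) := by
      refine h.2 _ ⟨test (r :: l) σ, ⟨.fin_test _ _, fun o ho => ?_⟩,
        test (r :: l) σ, hlower, .test_test _ _, fun o ho => hright ho.1⟩
      cases ho.1 with
      | test_test => exact hleft
    cases hjoin with
    | join hstep hw => exact ⟨_, _, rfl, hstep, hw⟩

theorem den_letterTp (N : ℕ) (a : α) (w : List α) :
    Den M m (letterTp m N (M a)) (inp (a :: w)) (inp w) := by
  refine ⟨.inp _ _, fun o ho => .accept ?_⟩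
  rintro σ rfl
  obtain ⟨_, σ', hw, h⟩ := binStep_of_den_joinTp ho
  cases hw
  exact ⟨σ', h⟩

theorem denList_letterTp (N : ℕ) (w : List α) :
    denList Before (fun n => Val M m (.ofNat n)) (w.map fun a => letterTp m N (M a))
      (inp w) (inp []) := by
  induction w with
  | nil => rfl
  | cons a w ih => exact ⟨_, den_letterTp N a w, ih⟩

theorem accepts_of_derL_targetTp {N g : ℕ} (hM : M.SymbolsIn (Set.Iic m)) (hg : g ≤ m)
    {w : List α} (h : DerL (w.map fun a => letterTp m N (M a)) (targetTp m N g)) :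
    M.Accepts w [g] := by
  have hempty : Den M m (acceptTp (bottom N)) (inp []) (stk []) := by
    refine ⟨.inp _ _, fun o ho => .accept ?_⟩
    rintro σ rfl
    obtain ⟨_, hσ, hfin⟩ := (den_bottom N _ _).1 ho
    cases hσ
    cases hfin
    rfl
  have htarget : Den M m (targetTp m N g) (inp w) (inp []) :=
    denList_le_den_of_derL (fun n => Val.le_before M m (.ofNat n)) h _ _ (denList_letterTp N w)
  have haccept : Val M m accept (inp w) (fin (encodeStack m [g] ++ [])) :=
    htarget.2 _ ⟨stk [], hempty, den_stackTp_bottom [g] N []⟩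
  cases haccept with
  | accept hw => exact accepts_of_binAccepts hM (by simpa using hg) (by simpa using hw _ rfl)

end Model

theorem accepts_iff_derL {α : Type*} {M : PDA α ℕ} {m N g : ℕ} (hM : M.SymbolsIn (Set.Iic m))
    (hN : ∀ a, ∀ r ∈ M a, r.2.length ≤ N) (hg : g ≤ m) {w : List α} :
    M.Accepts w [g] ↔ DerL (w.map fun a => letterTp m N (M a)) (targetTp m N g) :=
  ⟨derL_targetTp_of_accepts fun a r hr => ⟨hM a r hr _ List.mem_cons_self, hN a r hr⟩,
    accepts_of_derL_targetTp hM hg⟩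

end StackTypes

namespace PDA

variable {α Γ : Type*} [DecidableEq Γ]

/-- The type of the letter `a` for an automaton with stack symbols in `l` which pushes at most `N`
symbols; a stack symbol is represented by its position in `l`. -/
def letterTp (M : PDA α Γ) (l : List Γ) (N : ℕ) (a : α) : Tp :=
  StackTypes.letterTp l.length N (M.map l.idxOf a)

/-- The target type for the initial stack `[g]`. -/
def targetTp (l : List Γ) (N : ℕ) (g : Γ) : Tp := StackTypes.targetTp l.length N (l.idxOf g)

theorem accepts_iff_derL {M : PDA α Γ} {l : List Γ} {N : ℕ} (hM : M.SymbolsIn {x | x ∈ l})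
    (hN : ∀ a, ∀ r ∈ M a, r.2.length ≤ N) {g : Γ} (hg : g ∈ l) {w : List α} :
    M.Accepts w [g] ↔ DerL (w.map (M.letterTp l N)) (targetTp l N g) := by
  have hinj : {x | x ∈ l}.InjOn l.idxOf := fun x hx _ _ h => (List.idxOf_inj hx).1 h
  have hmap : (M.map l.idxOf).SymbolsIn (Set.Iic l.length) := fun a r hr x hx => by
    obtain ⟨s, -, rfl⟩ := List.mem_map.1 hr
    obtain ⟨y, -, rfl⟩ := List.mem_map.1 (show x ∈ (s.1 :: s.2).map l.idxOf from hx)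
    exact List.idxOf_le_length
  have hlen : ∀ a, ∀ r ∈ M.map l.idxOf a, r.2.length ≤ N := fun a r hr => by
    obtain ⟨s, hs, rfl⟩ := List.mem_map.1 hr
    simpa using hN a s hs
  exact (accepts_map_iff hinj hM (by simpa using hg)).symm.trans
    (StackTypes.accepts_iff_derL hmap hlen List.idxOf_le_length)

end PDA

/-! ### Derivations of a context-free grammar -/

/-- The sentential form rewrites to the word, by independent derivations of its symbols. -/
inductive Yields {T : Type} (G : CFG T) : List (T ⊕ ℕ) → List T → Prop
  | nil : Yields G [] []
  | term {a : T} {γ : List (T ⊕ ℕ)} {w : List T} :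
      Yields G γ w → Yields G (Sum.inl a :: γ) (a :: w)
  | rule {r : ℕ × List (T ⊕ ℕ)} {γ : List (T ⊕ ℕ)} {u w : List T} :
      r ∈ G.2 → Yields G r.2 u → Yields G γ w → Yields G (Sum.inr r.1 :: γ) (u ++ w)

namespace Yields

variable {T : Type} {G : CFG T}

theorem append {γ δ : List (T ⊕ ℕ)} {u v : List T} (h₁ : Yields G γ u) (h₂ : Yields G δ v) :
    Yields G (γ ++ δ) (u ++ v) := by
  induction h₁ with
  | nil => exact h₂
  | term _ ih => exact ih.term
  | rule hr h _ _ ih => rw [List.append_assoc]; exact .rule hr h ih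

theorem split {γ δ : List (T ⊕ ℕ)} {w : List T} (h : Yields G (γ ++ δ) w) :
    ∃ u v, w = u ++ v ∧ Yields G γ u ∧ Yields G δ v := by
  induction γ generalizing w with
  | nil => exact ⟨[], w, rfl, .nil, h⟩
  | cons s γ ih =>
    cases h with
    | term h =>
      obtain ⟨u, v, rfl, h₁, h₂⟩ := ih h
      exact ⟨_, v, rfl, h₁.term, h₂⟩
    | rule hr h₀ h =>
      obtain ⟨u, v, rfl, h₁, h₂⟩ := ih h
      exact ⟨_, v, (List.append_assoc _ _ _).symm, .rule hr h₀ h₁, h₂⟩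

theorem map_inl (w : List T) : Yields G (w.map Sum.inl) w := by
  induction w with
  | nil => exact .nil
  | cons a w ih => exact ih.term

theorem singleton_of_rule {r : ℕ × List (T ⊕ ℕ)} (hr : r ∈ G.2) {u : List T}
    (h : Yields G r.2 u) : Yields G [Sum.inr r.1] u := by
  simpa using Yields.rule hr h .nil

theorem of_step {x y : List (T ⊕ ℕ)} (h : CFGStep G x y) {w : List T} (hy : Yields G y w) :
    Yields G x w := by
  obtain ⟨r, hr, p, q, rfl, rfl⟩ := h
  obtain ⟨u, v, rfl, h₁, h₂⟩ := hy.split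
  obtain ⟨u₁, u₂, rfl, h₃, h₄⟩ := h₁.split
  rw [List.append_assoc]
  exact h₃.append (.rule hr h₄ h₂)

theorem steps_append {x y : List (T ⊕ ℕ)} (h : Relation.ReflTransGen (CFGStep G) x y)
    (p q : List (T ⊕ ℕ)) :
    Relation.ReflTransGen (CFGStep G) (p ++ x ++ q) (p ++ y ++ q) := by
  refine h.lift (fun x => p ++ x ++ q) ?_
  rintro _ _ ⟨r, hr, p', q', rfl, rfl⟩
  exact ⟨r, hr, p ++ p', q' ++ q, by simp, by simp⟩

theorem steps {γ : List (T ⊕ ℕ)} {w : List T} (h : Yields G γ w) :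
    Relation.ReflTransGen (CFGStep G) γ (w.map Sum.inl) := by
  induction h with
  | nil => exact .refl
  | @term a γ w _ ih => simpa using steps_append ih [Sum.inl a] []
  | @rule r γ u w hr _ _ ih₁ ih₂ =>
    refine Relation.ReflTransGen.head (b := r.2 ++ γ) ⟨r, hr, [], γ, rfl, rfl⟩ ?_
    have h₁ := steps_append ih₁ [] γ
    have h₂ := steps_append ih₂ (u.map Sum.inl) []
    simp only [List.nil_append, List.append_nil] at h₁ h₂
    simpa using h₁.trans h₂

end Yields

theorem mem_lang_iff_yields {T : Type} {G : CFG T} {w : List T} :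
    w ∈ Lang G ↔ Yields G [Sum.inr G.1] w := by
  refine ⟨fun h => ?_, Yields.steps⟩
  have h : Relation.ReflTransGen (CFGStep G) [Sum.inr G.1] (w.map Sum.inl) := h
  generalize [Sum.inr G.1] = γ at h
  induction h using Relation.ReflTransGen.head_induction_on with
  | refl => exact Yields.map_inl w
  | head h _ ih => exact Yields.of_step h ih

/-! ### The left-corner automaton of a grammar -/

section ReachabilityClosure

open Relation

theorem reflTransGen_insert_edge_iff {α : Type*} {R : α → α → Prop} {a b x y : α} :
    ReflTransGen (fun x y => R x y ∨ x = a ∧ y = b) x y ↔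
      ReflTransGen R x y ∨ ReflTransGen R x a ∧ ReflTransGen R b y := by
  have hmono {x y : α} (h : ReflTransGen R x y) :
      ReflTransGen (fun x y => R x y ∨ x = a ∧ y = b) x y :=
    ReflTransGen.mono (fun _ _ => Or.inl) _ _ h
  constructor
  · intro h
    induction h with
    | refl => exact .inl .refl
    | tail _ hyz ih =>
      rcases hyz with hyz | ⟨rfl, rfl⟩
      · exact ih.imp (·.tail hyz) fun h => ⟨h.1, h.2.tail hyz⟩
      · exact .inr ⟨ih.elim id And.left, .refl⟩
  · rintro (h | ⟨hxa, hby⟩)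
    · exact hmono h
    · exact ((hmono hxa).tail (.inr ⟨rfl, rfl⟩)).trans (hmono hby)

variable {α : Type*} [DecidableEq α]

/-- Adds an edge to a transitive list of edges and closes the result under composition. -/
def addEdge (P : List (α × α)) (e : α × α) : List (α × α) :=
  P ++ (e.1 :: (P.filter fun p => p.2 = e.1).map Prod.fst) ×ˢ
    (e.2 :: (P.filter fun p => p.1 = e.2).map Prod.snd)

/-- The transitive closure of a list of edges. -/
def transClosure (E : List (α × α)) : List (α × α) := E.foldl addEdge []

theorem mem_addEdge {P : List (α × α)} {a b x y : α} :
    (x, y) ∈ addEdge P (a, b) ↔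
      (x, y) ∈ P ∨ (x = a ∨ (x, a) ∈ P) ∧ (b = y ∨ (b, y) ∈ P) := by
  simp only [addEdge, List.mem_append, List.mem_product, List.mem_cons, List.mem_map,
    List.mem_filter, decide_eq_true_eq, Prod.exists, exists_eq_right]
  grind

theorem reflTransGen_iff_eq_or_mem_transClosure {E : List (α × α)} {x y : α} :
    ReflTransGen (fun x y => (x, y) ∈ E) x y ↔ x = y ∨ (x, y) ∈ transClosure E := by
  induction E using List.reverseRecOn generalizing x y with
  | nil => simp [transClosure, reflTransGen_iff_eq, eq_comm]
  | append_singleton E e ih =>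
    obtain ⟨a, b⟩ := e
    have hE : transClosure (E ++ [(a, b)]) = addEdge (transClosure E) (a, b) := by
      simp [transClosure]
    simp only [hE, mem_addEdge, List.mem_append, List.mem_singleton, Prod.mk.injEq,
      reflTransGen_insert_edge_iff, ih, or_assoc]

instance decidableReflTransGen (E : List (α × α)) (x y : α) :
    Decidable (ReflTransGen (fun x y => (x, y) ∈ E) x y) :=
  decidable_of_iff' _ reflTransGen_iff_eq_or_mem_transClosure

end ReachabilityClosure

/-- The stack symbols of the left-corner automaton: `(none, D)` expects a word derived from `D`, and
`(some X, D)` expects a word completing each word derived from `X` to one derived from `D`. -/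
abbrev Goal (T : Type) : Type := Option (T ⊕ ℕ) × (T ⊕ ℕ)

namespace CFG

variable {T : Type}

/-- The start symbol and the symbols occurring on the right-hand sides of rules. -/
def syms (G : CFG T) : List (T ⊕ ℕ) := Sum.inr G.1 :: G.2.flatMap Prod.snd

/-- The unit rules, read from right to left. -/
def unitEdges (G : CFG T) : List ((T ⊕ ℕ) × (T ⊕ ℕ)) :=
  G.2.flatMap fun r => if r.2.length = 1 then r.2.map fun X => (X, Sum.inr r.1) else []

/-- The symbol `X` is derived from `Y` by unit rules. -/
def Reach (G : CFG T) : T ⊕ ℕ → T ⊕ ℕ → Prop :=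
  Relation.ReflTransGen fun X Y => (X, Y) ∈ G.unitEdges

instance [DecidableEq T] (G : CFG T) (X Y : T ⊕ ℕ) : Decidable (G.Reach X Y) :=
  decidableReflTransGen _ X Y

/-- The stacks by which one may continue towards `D` after a word derived from `X`. -/
def conts [DecidableEq T] (G : CFG T) (X D : T ⊕ ℕ) : List (List (Goal T)) :=
  (if G.Reach X D then [[]] else []) ++
    (G.syms.filter fun Y => G.Reach X Y).map fun Y => [(some Y, D)]

/-- The transitions by which the letter `a` starts a derivation from a goal. -/
def startRules [DecidableEq T] (G : CFG T) (a : T) : List (Goal T × List (Goal T)) :=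
  G.syms.flatMap fun D => (G.conts (Sum.inl a) D).map fun β => ((none, D), β)

/-- The transitions by which the letter `a`, after a left corner beginning the right-hand side of
the rule `r`, starts the second symbol of that side. -/
def stepRules [DecidableEq T] (G : CFG T) (a : T) (r : ℕ × List (T ⊕ ℕ)) :
    List (Goal T × List (Goal T)) :=
  match r.2 with
  | X :: Y :: t => G.syms.flatMap fun D =>
      (G.conts (Sum.inl a) Y ×ˢ G.conts (Sum.inr r.1) D).map fun β =>
        ((some X, D), β.1 ++ t.map (Prod.mk none) ++ β.2)
  | _ => []

/-- The left-corner automaton. Each goal is paired with the left corner already recognised, so that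
every transition reads a letter. -/
def leftCorner [DecidableEq T] (G : CFG T) : PDA T (Goal T) :=
  fun a => G.startRules a ++ G.2.flatMap (G.stepRules a)

/-- The stack symbols in use. -/
def goals (G : CFG T) : List (Goal T) := (none :: G.syms.map some) ×ˢ G.syms

variable {G : CFG T}

theorem start_mem_syms : Sum.inr G.1 ∈ G.syms := List.mem_cons_self

theorem mem_syms_of_mem_rule {r : ℕ × List (T ⊕ ℕ)} (hr : r ∈ G.2) {X : T ⊕ ℕ} (hX : X ∈ r.2) :
    X ∈ G.syms :=
  List.mem_cons_of_mem _ (List.mem_flatMap.2 ⟨r, hr, hX⟩)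

theorem length_lt_length_syms {r : ℕ × List (T ⊕ ℕ)} (hr : r ∈ G.2) :
    r.2.length < G.syms.length := by
  rw [syms, List.length_cons, Nat.lt_succ_iff, List.length_flatMap]
  exact List.le_sum_of_mem (List.mem_map.2 ⟨r, hr, rfl⟩)

theorem none_mem_goals_iff {D : T ⊕ ℕ} : (none, D) ∈ G.goals ↔ D ∈ G.syms := by
  simp [goals]

theorem some_mem_goals_iff {X D : T ⊕ ℕ} :
    (some X, D) ∈ G.goals ↔ X ∈ G.syms ∧ D ∈ G.syms := by
  simp [goals]

theorem mem_unitEdges_iff {X Y : T ⊕ ℕ} :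
    (X, Y) ∈ G.unitEdges ↔ ∃ r ∈ G.2, r.2 = [X] ∧ Sum.inr r.1 = Y := by
  simp only [unitEdges, List.mem_flatMap]
  refine exists_congr fun r => and_congr_right fun _ => ?_
  rcases r with ⟨A, _ | ⟨Z, _ | ⟨Z', t⟩⟩⟩ <;> simp [eq_comm]

theorem Reach.of_unit_rule {r : ℕ × List (T ⊕ ℕ)} (hr : r ∈ G.2) {X Y : T ⊕ ℕ} (hX : r.2 = [X])
    (h : G.Reach (Sum.inr r.1) Y) : G.Reach X Y :=
  h.head (mem_unitEdges_iff.2 ⟨r, hr, hX, rfl⟩)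

theorem Reach.yields {X Y : T ⊕ ℕ} (h : G.Reach X Y) {u : List T} (hu : Yields G [X] u) :
    Yields G [Y] u := by
  induction h with
  | refl => exact hu
  | tail _ hYZ ih =>
    obtain ⟨r, hr, hY, rfl⟩ := mem_unitEdges_iff.1 hYZ
    exact Yields.singleton_of_rule hr (hY ▸ ih)

/-- The words expected by a stack symbol. -/
def expects (G : CFG T) : Goal T → Language T
  | (none, D) => {w | Yields G [D] w}
  | (some X, D) => {w | ∀ u, Yields G [X] u → Yields G [D] (u ++ w)}

theorem yields_of_mem_prod_expects {t : List (T ⊕ ℕ)} {w : List T}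
    (h : w ∈ ((t.map (Prod.mk none)).map G.expects).prod) : Yields G t w := by
  induction t generalizing w with
  | nil => obtain rfl := Set.mem_singleton_iff.1 h; exact .nil
  | cons X t ih =>
    obtain ⟨u, hu, v, hv, rfl⟩ := Language.mem_mul.1 h
    exact Yields.append (γ := [X]) hu (ih hv)

variable [DecidableEq T]

theorem mem_conts_iff {X D : T ⊕ ℕ} {β : List (Goal T)} :
    β ∈ G.conts X D ↔ G.Reach X D ∧ β = [] ∨ ∃ Y ∈ G.syms, G.Reach X Y ∧ β = [(some Y, D)] := by
  unfold conts
  split <;> simp_all [eq_comm, and_assoc]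

theorem nil_mem_conts (X : T ⊕ ℕ) : [] ∈ G.conts X X :=
  mem_conts_iff.2 (.inl ⟨.refl, rfl⟩)

theorem mem_goals_of_mem_conts {X D : T ⊕ ℕ} (hD : D ∈ G.syms) {β : List (Goal T)}
    (hβ : β ∈ G.conts X D) : ∀ g ∈ β, g ∈ G.goals := by
  rcases mem_conts_iff.1 hβ with ⟨-, rfl⟩ | ⟨Y, hY, -, rfl⟩
  · simp
  · simpa using some_mem_goals_iff.2 ⟨hY, hD⟩

theorem length_le_one_of_mem_conts {X D : T ⊕ ℕ} {β : List (Goal T)} (hβ : β ∈ G.conts X D) :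
    β.length ≤ 1 := by
  rcases mem_conts_iff.1 hβ with ⟨-, rfl⟩ | ⟨Y, -, -, rfl⟩ <;> simp

theorem mem_startRules_iff {a : T} {g : Goal T} {β : List (Goal T)} :
    (g, β) ∈ G.startRules a ↔
      ∃ D ∈ G.syms, g = (none, D) ∧ β ∈ G.conts (Sum.inl a) D := by
  simp only [startRules, List.mem_flatMap, List.mem_map, Prod.mk.injEq]
  grind

theorem mem_stepRules_iff {a : T} {r : ℕ × List (T ⊕ ℕ)} {g : Goal T} {β : List (Goal T)} :
    (g, β) ∈ G.stepRules a r ↔ ∃ X Y t, r.2 = X :: Y :: t ∧ ∃ D ∈ G.syms, g = (some X, D) ∧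
      ∃ β₁ ∈ G.conts (Sum.inl a) Y, ∃ β₂ ∈ G.conts (Sum.inr r.1) D,
        β = β₁ ++ t.map (Prod.mk none) ++ β₂ := by
  rcases r with ⟨A, _ | ⟨X, _ | ⟨Y, t⟩⟩⟩
  · simp [stepRules]
  · simp [stepRules]
  · simp only [stepRules, List.mem_flatMap, List.mem_map, Prod.exists, List.mem_product,
      Prod.mk.injEq, List.cons.injEq]
    grind

theorem mem_leftCorner_iff {a : T} {p : Goal T × List (Goal T)} :
    p ∈ G.leftCorner a ↔ p ∈ G.startRules a ∨ ∃ r ∈ G.2, p ∈ G.stepRules a r := by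
  simp [leftCorner]

theorem leftCorner_symbolsIn (G : CFG T) : G.leftCorner.SymbolsIn {g | g ∈ G.goals} := by
  rintro a ⟨g, β⟩ h
  simp only [List.forall_mem_cons, Set.mem_ofPred_eq]
  rcases mem_leftCorner_iff.1 h with h | ⟨r, hr, h⟩
  · obtain ⟨D, hD, rfl, hβ⟩ := mem_startRules_iff.1 h
    exact ⟨none_mem_goals_iff.2 hD, mem_goals_of_mem_conts hD hβ⟩
  · obtain ⟨X, Y, t, hr₂, D, hD, rfl, β₁, hβ₁, β₂, hβ₂, rfl⟩ := mem_stepRules_iff.1 h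
    have hsyms : ∀ Z ∈ X :: Y :: t, Z ∈ G.syms := fun Z hZ => mem_syms_of_mem_rule hr (hr₂ ▸ hZ)
    simp only [List.forall_mem_cons] at hsyms
    obtain ⟨hX, hY, ht⟩ := hsyms
    simp only [List.forall_mem_append, List.forall_mem_map]
    exact ⟨some_mem_goals_iff.2 ⟨hX, hD⟩, ⟨mem_goals_of_mem_conts hY hβ₁,
      fun Z hZ => none_mem_goals_iff.2 (ht Z hZ)⟩, mem_goals_of_mem_conts hD hβ₂⟩

theorem length_le_of_mem_leftCorner {a : T} {p : Goal T × List (Goal T)}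
    (h : p ∈ G.leftCorner a) : p.2.length ≤ G.syms.length := by
  rcases mem_leftCorner_iff.1 h with h | ⟨r, hr, h⟩
  · obtain ⟨D, -, -, hβ⟩ := mem_startRules_iff.1 h
    exact (length_le_one_of_mem_conts hβ).trans (List.length_pos_of_mem start_mem_syms)
  · obtain ⟨X, Y, t, hr₂, D, -, -, β₁, hβ₁, β₂, hβ₂, hβ⟩ := mem_stepRules_iff.1 h
    have hlt := length_lt_length_syms hr
    have h₁ := length_le_one_of_mem_conts hβ₁
    have h₂ := length_le_one_of_mem_conts hβ₂
    simp only [hr₂, hβ, List.length_cons, List.length_append, List.length_map] at hlt ⊢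
    omega

theorem yields_of_mem_conts {X D : T ⊕ ℕ} {β : List (Goal T)} (hβ : β ∈ G.conts X D)
    {u v : List T} (hu : Yields G [X] u) (hv : v ∈ (β.map G.expects).prod) :
    Yields G [D] (u ++ v) := by
  rcases mem_conts_iff.1 hβ with ⟨hXD, rfl⟩ | ⟨Y, -, hXY, rfl⟩
  · obtain rfl := Set.mem_singleton_iff.1 hv
    simpa using hXD.yields hu
  · rw [List.map_singleton, List.prod_singleton] at hv
    exact hv u (hXY.yields hu)

theorem cons_mem_expects {a : T} {g : Goal T} {β : List (Goal T)} (h : (g, β) ∈ G.leftCorner a)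
    {w : List T} (hw : w ∈ (β.map G.expects).prod) : a :: w ∈ G.expects g := by
  have ha : Yields G [Sum.inl a] [a] := .term .nil
  rcases mem_leftCorner_iff.1 h with h | ⟨r, hr, h⟩
  · obtain ⟨D, -, rfl, hβ⟩ := mem_startRules_iff.1 h
    exact yields_of_mem_conts hβ ha hw
  · obtain ⟨X, Y, t, hr₂, D, -, rfl, β₁, hβ₁, β₂, hβ₂, rfl⟩ := mem_stepRules_iff.1 h
    simp only [List.map_append, List.prod_append, Language.mem_mul] at hw
    obtain ⟨_, ⟨w₁, hw₁, w₂, hw₂, rfl⟩, w₃, hw₃, rfl⟩ := hw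
    intro u hu
    have hY : Yields G [Y] ([a] ++ w₁) := yields_of_mem_conts hβ₁ ha hw₁
    have hrhs : Yields G r.2 (u ++ ([a] ++ w₁ ++ w₂)) :=
      hr₂ ▸ Yields.append (γ := [X]) hu (hY.append (yields_of_mem_prod_expects hw₂))
    simpa using yields_of_mem_conts hβ₂ (Yields.singleton_of_rule hr hrhs) hw₃

theorem mem_prod_expects_of_accepts {w : List T} {γ : List (Goal T)}
    (h : G.leftCorner.Accepts w γ) : w ∈ (γ.map G.expects).prod := by
  induction h with
  | nil => rfl
  | cons hr _ ih =>
    rw [List.map_append, List.prod_append] at ih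
    obtain ⟨u, hu, v, hv, rfl⟩ := Language.mem_mul.1 ih
    rw [List.map_cons, List.prod_cons]
    exact Language.mem_mul.2 ⟨_, cons_mem_expects hr hu, v, hv, rfl⟩

/-- The word `v` can serve as a left corner `X`: any continuation after `X` may be postponed until
`v` is read, starting with the continuations after its first letter. -/
def IsCorner (G : CFG T) (X : T ⊕ ℕ) (v : List T) : Prop :=
  ∃ a v', v = a :: v' ∧ ∀ D ∈ G.syms, ∀ β ∈ G.conts X D, ∀ w, G.leftCorner.Accepts w β →
    ∃ β' ∈ G.conts (Sum.inl a) D, G.leftCorner.Accepts (v' ++ w) β'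

theorem isCorner_inl (a : T) : G.IsCorner (Sum.inl a) [a] :=
  ⟨a, [], rfl, fun _ _ β hβ _ hw => ⟨β, hβ, hw⟩⟩

theorem IsCorner.accepts {X : T ⊕ ℕ} (hX : X ∈ G.syms) {v : List T} (h : G.IsCorner X v) :
    G.leftCorner.Accepts v [(none, X)] := by
  obtain ⟨a, v', rfl, h⟩ := h
  obtain ⟨β, hβ, hacc⟩ := h X hX [] (nil_mem_conts X) [] .nil
  have hstep : ((none, X), β) ∈ G.leftCorner a :=
    mem_leftCorner_iff.2 (.inl (mem_startRules_iff.2 ⟨X, hX, rfl, hβ⟩))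
  exact .cons hstep (by simpa using hacc)

theorem accepts_of_forall₂_isCorner {t : List (T ⊕ ℕ)} (ht : ∀ X ∈ t, X ∈ G.syms)
    {vs : List (List T)} (h : List.Forall₂ G.IsCorner t vs) :
    G.leftCorner.Accepts vs.flatten (t.map (Prod.mk none)) := by
  induction h with
  | nil => exact .nil
  | cons h _ ih =>
    obtain ⟨hX, ht⟩ := List.forall_mem_cons.1 ht
    exact (h.accepts hX).append (ih ht)

theorem mem_conts_of_unit_rule {r : ℕ × List (T ⊕ ℕ)} (hr : r ∈ G.2) {X D : T ⊕ ℕ}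
    (hX : r.2 = [X]) {β : List (Goal T)} (hβ : β ∈ G.conts (Sum.inr r.1) D) : β ∈ G.conts X D :=
  mem_conts_iff.2 ((mem_conts_iff.1 hβ).imp (fun h => ⟨h.1.of_unit_rule hr hX, h.2⟩)
    fun ⟨Y, hY, h, hβ⟩ => ⟨Y, hY, h.of_unit_rule hr hX, hβ⟩)

theorem IsCorner.of_unit_rule {r : ℕ × List (T ⊕ ℕ)} (hr : r ∈ G.2) {X : T ⊕ ℕ} (hX : r.2 = [X])
    {v : List T} (h : G.IsCorner X v) : G.IsCorner (Sum.inr r.1) v := by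
  obtain ⟨a, v', rfl, h⟩ := h
  exact ⟨a, v', rfl, fun D hD β hβ => h D hD β (mem_conts_of_unit_rule hr hX hβ)⟩

theorem IsCorner.of_long_rule {r : ℕ × List (T ⊕ ℕ)} (hr : r ∈ G.2) {X Y : T ⊕ ℕ}
    {t : List (T ⊕ ℕ)} (hr₂ : r.2 = X :: Y :: t) {u v : List T} {vs : List (List T)}
    (hu : G.IsCorner X u) (hv : G.IsCorner Y v) (hvs : List.Forall₂ G.IsCorner t vs) :
    G.IsCorner (Sum.inr r.1) (u ++ v ++ vs.flatten) := by
  have hsyms : ∀ Z ∈ X :: Y :: t, Z ∈ G.syms := fun Z hZ => mem_syms_of_mem_rule hr (hr₂ ▸ hZ)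
  simp only [List.forall_mem_cons] at hsyms
  obtain ⟨hX, hY, ht⟩ := hsyms
  obtain ⟨a, u, rfl, hu⟩ := hu
  obtain ⟨b, v, rfl, hv⟩ := hv
  refine ⟨a, u ++ b :: v ++ vs.flatten, rfl, fun D hD β hβ w hw => ?_⟩
  obtain ⟨β', hβ', hacc'⟩ := hv Y hY [] (nil_mem_conts Y) [] .nil
  have hstep : ((some X, D), β' ++ t.map (Prod.mk none) ++ β) ∈ G.leftCorner b :=
    mem_leftCorner_iff.2 (.inr ⟨r, hr,
      mem_stepRules_iff.2 ⟨X, Y, t, hr₂, D, hD, rfl, β', hβ', β, hβ, rfl⟩⟩)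
  have hacc : G.leftCorner.Accepts (b :: (v ++ [] ++ vs.flatten ++ w)) [(some X, D)] :=
    .cons hstep (by
      rw [List.append_nil (_ ++ β)]
      exact (hacc'.append (accepts_of_forall₂_isCorner ht hvs)).append hw)
  simpa using hu D hD [(some X, D)] (mem_conts_iff.2 (.inr ⟨X, hX, .refl, rfl⟩)) _ hacc

theorem IsCorner.of_rule (hG : EpsFree G) {r : ℕ × List (T ⊕ ℕ)} (hr : r ∈ G.2)
    {vs : List (List T)} (h : List.Forall₂ G.IsCorner r.2 vs) :
    G.IsCorner (Sum.inr r.1) vs.flatten := by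
  have hne := hG r hr
  generalize hr₂ : r.2 = ρ at h hne
  rcases h with _ | ⟨hu, _ | ⟨hv, hvs⟩⟩
  · exact absurd rfl hne
  · simpa using hu.of_unit_rule hr hr₂
  · simpa using IsCorner.of_long_rule hr hr₂ hu hv hvs

theorem exists_forall₂_isCorner (hG : EpsFree G) {γ : List (T ⊕ ℕ)} {w : List T}
    (h : Yields G γ w) : ∃ vs, w = vs.flatten ∧ List.Forall₂ G.IsCorner γ vs := by
  induction h with
  | nil => exact ⟨[], rfl, .nil⟩
  | @term a _ _ _ ih =>
    obtain ⟨vs, rfl, hvs⟩ := ih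
    exact ⟨[a] :: vs, rfl, .cons (isCorner_inl a) hvs⟩
  | rule hr _ _ ih₁ ih₂ =>
    obtain ⟨us, rfl, hus⟩ := ih₁
    obtain ⟨vs, rfl, hvs⟩ := ih₂
    exact ⟨us.flatten :: vs, rfl, .cons (.of_rule hG hr hus) hvs⟩

theorem mem_lang_iff_accepts_leftCorner (hG : EpsFree G) {w : List T} :
    w ∈ Lang G ↔ G.leftCorner.Accepts w [(none, Sum.inr G.1)] := by
  rw [mem_lang_iff_yields]
  constructor
  · intro h
    obtain ⟨vs, rfl, hvs⟩ := exists_forall₂_isCorner hG h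
    exact accepts_of_forall₂_isCorner (by simp [start_mem_syms]) hvs
  · intro h
    exact yields_of_mem_prod_expects (mem_prod_expects_of_accepts h)

end CFG

namespace CFG

variable {T : Type} [DecidableEq T]

/-- The type of the letter `a` in the categorial grammar obtained from `G`. -/
def letterTp (G : CFG T) (a : T) : Tp := G.leftCorner.letterTp G.goals G.syms.length a

/-- The target type of the categorial grammar obtained from `G`. -/
def targetTp (G : CFG T) : Tp := PDA.targetTp G.goals G.syms.length (none, Sum.inr G.1)

theorem mem_lang_iff_derL {G : CFG T} (hG : EpsFree G) {w : List T} :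
    w ∈ Lang G ↔ DerL (w.map G.letterTp) G.targetTp :=
  (mem_lang_iff_accepts_leftCorner hG).trans
    (PDA.accepts_iff_derL G.leftCorner_symbolsIn (fun _ _ => length_le_of_mem_leftCorner)
      (none_mem_goals_iff.2 start_mem_syms))

end CFG

/-! ### Effectiveness of the construction -/

section PrimrecTypes

variable {α β : Type} [Primcodable α] [Primcodable β]

/-- The code of the type `f a` depends primitive recursively on `a`. -/
def PrimrecTp (f : α → Tp) : Prop := Primrec fun a => encodeTp (f a)

/-- The code of the type `F a X` is computed primitive recursively from `a` and the code
of `X`. -/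
def PrimrecOp (F : α → Tp → Tp) : Prop :=
  ∃ c : α → ℕ → ℕ, Primrec₂ c ∧ ∀ a X, encodeTp (F a X) = c a (encodeTp X)

namespace PrimrecOp

theorem id : PrimrecOp fun (_ : α) X => X := ⟨fun _ n => n, Primrec₂.right, fun _ _ => rfl⟩

theorem of_primrecTp {f : α → Tp} (hf : PrimrecTp f) : PrimrecOp fun a _ => f a := by
  unfold PrimrecTp at hf
  exact ⟨fun a _ => encodeTp (f a), (hf.comp Primrec.fst).to₂, fun _ _ => rfl⟩

theorem const (A : Tp) : PrimrecOp fun (_ : α) _ => A := of_primrecTp (Primrec.const _)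

theorem comp_op {F F' : α → Tp → Tp} (hF : PrimrecOp F) (hF' : PrimrecOp F') :
    PrimrecOp fun a X => F a (F' a X) := by
  obtain ⟨c, hc, h⟩ := hF
  obtain ⟨c', hc', h'⟩ := hF'
  exact ⟨fun a n => c a (c' a n), hc.comp₂ Primrec₂.left hc', fun a X => by rw [h, h']⟩

theorem natPair {F₁ F₂ F : α → Tp → Tp} (k : ℕ)
    (h : ∀ a X, encodeTp (F a X) = Nat.pair k (Nat.pair (encodeTp (F₁ a X)) (encodeTp (F₂ a X))))
    (h₁ : PrimrecOp F₁) (h₂ : PrimrecOp F₂) : PrimrecOp F := by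
  obtain ⟨c₁, hc₁, h₁⟩ := h₁
  obtain ⟨c₂, hc₂, h₂⟩ := h₂
  exact ⟨fun a n => Nat.pair k (Nat.pair (c₁ a n) (c₂ a n)),
    Primrec₂.natPair.comp₂ (Primrec₂.const k) (Primrec₂.natPair.comp₂ hc₁ hc₂),
    fun a X => by rw [h, h₁, h₂]⟩

theorem mul {F₁ F₂ : α → Tp → Tp} (h₁ : PrimrecOp F₁) (h₂ : PrimrecOp F₂) :
    PrimrecOp fun a X => Tp.mul (F₁ a X) (F₂ a X) := natPair 1 (fun _ _ => rfl) h₁ h₂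

theorem ldiv {F₁ F₂ : α → Tp → Tp} (h₁ : PrimrecOp F₁) (h₂ : PrimrecOp F₂) :
    PrimrecOp fun a X => Tp.ldiv (F₁ a X) (F₂ a X) := natPair 2 (fun _ _ => rfl) h₁ h₂

theorem rdiv {F₁ F₂ : α → Tp → Tp} (h₁ : PrimrecOp F₁) (h₂ : PrimrecOp F₂) :
    PrimrecOp fun a X => Tp.rdiv (F₁ a X) (F₂ a X) := natPair 3 (fun _ _ => rfl) h₁ h₂

theorem iterate {F : α → Tp → Tp} (hF : PrimrecOp F) {n : α → ℕ} (hn : Primrec n) :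
    PrimrecOp fun a X => (F a)^[n a] X := by
  obtain ⟨c, hc, h⟩ := hF
  refine ⟨fun a k => (c a)^[n a] k, Primrec.nat_iterate (hn.comp Primrec.fst) Primrec.snd
    (hc.comp (Primrec.fst.comp Primrec.fst) Primrec.snd).to₂, fun a X => ?_⟩
  exact Function.Semiconj.iterate_right (f := encodeTp) (h a) (n a) X

theorem foldl {F : α × β → Tp → Tp} (hF : PrimrecOp F) {l : α → List β} (hl : Primrec l) :
    PrimrecOp fun a X => (l a).foldl (fun X b => F (a, b) X) X := by
  obtain ⟨c, hc, h⟩ := hF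
  refine ⟨fun a k => (l a).foldl (fun k b => c (a, b) k) k,
    Primrec.list_foldl (hl.comp Primrec.fst) Primrec.snd
      (hc.comp (Primrec.pair (Primrec.fst.comp Primrec.fst) (Primrec.snd.comp Primrec.snd))
        (Primrec.fst.comp Primrec.snd)).to₂, fun a X => ?_⟩
  beta_reduce
  induction l a generalizing X with
  | nil => rfl
  | cons b l ih => simp only [List.foldl_cons, ih, h]

theorem foldr {F : α × β → Tp → Tp} (hF : PrimrecOp F) {l : α → List β} (hl : Primrec l) :
    PrimrecOp fun a X => (l a).foldr (fun b X => F (a, b) X) X := by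
  obtain ⟨c, hc, h⟩ := hF
  refine ⟨fun a k => (l a).foldr (fun b k => c (a, b) k) k,
    Primrec.list_foldr (hl.comp Primrec.fst) Primrec.snd
      (hc.comp (Primrec.pair (Primrec.fst.comp Primrec.fst) (Primrec.fst.comp Primrec.snd))
        (Primrec.snd.comp Primrec.snd)).to₂, fun a X => ?_⟩
  beta_reduce
  induction l a with
  | nil => rfl
  | cons b l ih => simp only [List.foldr_cons, ← ih, h]

theorem apply {F : α → Tp → Tp} (hF : PrimrecOp F) {f : α → Tp} (hf : PrimrecTp f) :
    PrimrecTp fun a => F a (f a) := by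
  obtain ⟨c, hc, h⟩ := hF
  unfold PrimrecTp at hf
  exact (hc.comp Primrec.id hf).of_eq fun a => (h a (f a)).symm

end PrimrecOp

theorem PrimrecTp.comp {f : β → Tp} (hf : PrimrecTp f) {g : α → β} (hg : Primrec g) :
    PrimrecTp fun a => f (g a) := by
  unfold PrimrecTp at hf
  exact hf.comp hg

end PrimrecTypes

namespace StackTypes

variable {α : Type} [Primcodable α]

theorem primrecOp_iterate_mul_iterate_mul {i j : α → ℕ} (hi : Primrec i) (hj : Primrec j) :
    PrimrecOp fun a X => (Tp.mul (bitTp false))^[i a] ((Tp.mul (bitTp true))^[j a] X) :=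
  .comp_op (.iterate (.mul (.const _) .id) hi) (.iterate (.mul (.const _) .id) hj)

theorem primrecOp_block {m g : α → ℕ} (hm : Primrec m) (hg : Primrec g) :
    PrimrecOp fun a => block (m a) (g a) :=
  primrecOp_iterate_mul_iterate_mul (Primrec.succ.comp hg)
    (Primrec.succ.comp (Primrec.nat_sub.comp hm hg))

theorem primrecOp_stackTp {m : α → ℕ} {γ : α → List ℕ} (hm : Primrec m) (hγ : Primrec γ) :
    PrimrecOp fun a => stackTp (m a) (γ a) :=
  .foldl (primrecOp_block (hm.comp Primrec.fst) Primrec.snd) hγ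

theorem primrecTp_bottom {n : α → ℕ} (hn : Primrec n) : PrimrecTp fun a => bottom (n a) :=
  PrimrecOp.apply (.iterate (.mul (.mul .id (.const _)) (.const _)) hn) (Primrec.const _)

theorem primrecOp_acceptTp {F : α → Tp → Tp} (hF : PrimrecOp F) :
    PrimrecOp fun a X => acceptTp (F a X) := .rdiv (.const _) hF

theorem primrecTp_ruleTp {m N : α → ℕ} {r : α → ℕ × List ℕ} (hm : Primrec m) (hN : Primrec N)
    (hr : Primrec r) : PrimrecTp fun a => ruleTp (m a) (N a) (r a) :=
  PrimrecOp.apply (.mul (primrecOp_acceptTp (primrecOp_stackTp hm (Primrec.snd.comp hr)))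
    (primrecOp_block hm (Primrec.fst.comp hr))) (primrecTp_bottom hN)

theorem primrecTp_lowerTp {m N : α → ℕ} (hm : Primrec m) (hN : Primrec N) :
    PrimrecTp fun a => lowerTp (m a) (N a) :=
  PrimrecOp.apply (.mul (.const _)
    (primrecOp_iterate_mul_iterate_mul (Primrec.succ.comp hm) (Primrec.succ.comp hm)))
    (primrecTp_bottom hN)

theorem primrecOp_join (j : Tp) {D Q : α → Tp} (hD : PrimrecTp D) (hQ : PrimrecTp Q) :
    PrimrecOp fun a P => Tp.join j (D a) P (Q a) := by
  have hDj : PrimrecOp fun a (_ : Tp) => Tp.ldiv (D a) j := .ldiv (.of_primrecTp hD) (.const _)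
  exact .rdiv (.const _) (.mul (.rdiv (.ldiv .id (.const _)) hDj)
    (.mul hDj (.ldiv hDj (.ldiv (.of_primrecTp hQ) (.const _)))))

theorem primrecTp_letterTp {m N : α → ℕ} {l : α → List (ℕ × List ℕ)} (hm : Primrec m)
    (hN : Primrec N) (hl : Primrec l) : PrimrecTp fun a => letterTp (m a) (N a) (l a) := by
  have hjoin : PrimrecOp fun (p : α × ℕ × List ℕ) U =>
      Tp.join Atom.join.tp (lowerTp (m p.1) (N p.1)) U (ruleTp (m p.1) (N p.1) p.2) :=
    primrecOp_join _ ((primrecTp_lowerTp hm hN).comp Primrec.fst)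
      (primrecTp_ruleTp (hm.comp Primrec.fst) (hN.comp Primrec.fst) Primrec.snd)
  exact (primrecOp_acceptTp (hjoin.foldr hl)).apply (primrecTp_lowerTp hm hN)

theorem primrecTp_targetTp {m N g : α → ℕ} (hm : Primrec m) (hN : Primrec N) (hg : Primrec g) :
    PrimrecTp fun a => targetTp (m a) (N a) (g a) :=
  PrimrecOp.apply (.rdiv (.const _) (.mul (primrecOp_acceptTp .id)
    (primrecOp_stackTp hm (Primrec.list_cons.comp hg (Primrec.const []))))) (primrecTp_bottom hN)

end StackTypes

section PrimrecLists

open Primrec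

variable {α β : Type} [Primcodable α] [Primcodable β]

theorem primrec₂_product : Primrec₂ fun (l : List α) (l' : List β) => l ×ˢ l' :=
  list_flatMap fst (list_map (snd.comp fst) (Primrec.pair (snd.comp fst) snd).to₂).to₂

theorem primrec₂_addEdge [DecidableEq α] :
    Primrec₂ (addEdge : List (α × α) → α × α → List (α × α)) := by
  have hin : PrimrecRel fun (p e : α × α) => p.2 = e.1 :=
    Primrec.eq.comp (snd.comp fst) (fst.comp snd)
  have hout : PrimrecRel fun (p e : α × α) => p.1 = e.2 :=
    Primrec.eq.comp (fst.comp fst) (snd.comp snd)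
  exact list_append.comp fst (primrec₂_product.comp
    (list_cons.comp (fst.comp snd) (list_map hin.listFilter (fst.comp snd).to₂))
    (list_cons.comp (snd.comp snd) (list_map hout.listFilter (snd.comp snd).to₂)))

theorem primrec_transClosure [DecidableEq α] :
    Primrec (transClosure : List (α × α) → List (α × α)) :=
  list_foldl .id (.const []) (primrec₂_addEdge.comp (fst.comp snd) (snd.comp snd)).to₂

theorem primrecPred_reflTransGen {E : β → List (α × α)} {x y : β → α} (hE : Primrec E)
    (hx : Primrec x) (hy : Primrec y) :
    PrimrecPred fun b => Relation.ReflTransGen (fun x y => (x, y) ∈ E b) (x b) (y b) := by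
  classical
  exact ((Primrec.eq.comp hx hy).or (Primrec.eq.exists_mem_list.comp
    (primrec_transClosure.comp hE) (Primrec.pair hx hy))).of_eq fun _ => by
      simp [reflTransGen_iff_eq_or_mem_transClosure]

end PrimrecLists

namespace PDA

open Primrec

variable {α β Γ : Type} [Primcodable β] [Primcodable Γ] [DecidableEq Γ] {l : β → List Γ}
  {N : β → ℕ}

theorem primrecTp_letterTp {M : β → PDA α Γ} {a : β → α} (hM : Primrec fun b => M b (a b))
    (hl : Primrec l) (hN : Primrec N) : PrimrecTp fun b => (M b).letterTp (l b) (N b) (a b) :=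
  StackTypes.primrecTp_letterTp (list_length.comp hl) hN
    (list_map hM (Primrec.pair (list_idxOf.comp (fst.comp snd) (hl.comp fst))
      (list_map (snd.comp snd) (list_idxOf.comp snd (hl.comp (fst.comp fst))).to₂)).to₂)

theorem primrecTp_targetTp {g : β → Γ} (hl : Primrec l) (hN : Primrec N) (hg : Primrec g) :
    PrimrecTp fun b => targetTp (l b) (N b) (g b) :=
  StackTypes.primrecTp_targetTp (list_length.comp hl) hN (list_idxOf.comp hg hl)

end PDA

namespace CFG

open Primrec

variable {T β : Type} [Primcodable T] [Primcodable β]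

theorem primrec_syms : Primrec (syms : CFG T → List (T ⊕ ℕ)) :=
  list_cons.comp (sumInr.comp fst) (list_flatMap snd (snd.comp snd).to₂)

theorem primrec_goals : Primrec (goals : CFG T → List (Goal T)) :=
  primrec₂_product.comp (list_cons.comp (.const none)
    (list_map primrec_syms (option_some.comp snd).to₂)) primrec_syms

theorem primrec_unitEdges : Primrec (unitEdges : CFG T → List ((T ⊕ ℕ) × (T ⊕ ℕ))) := by
  have hr : Primrec fun r : ℕ × List (T ⊕ ℕ) =>
      if r.2.length = 1 then r.2.map fun X => (X, (Sum.inr r.1 : T ⊕ ℕ)) else [] :=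
    Primrec.ite (Primrec.eq.comp (list_length.comp snd) (.const 1))
      (list_map snd (Primrec.pair snd (sumInr.comp (fst.comp fst))).to₂) (.const _)
  exact list_flatMap snd (hr.comp snd).to₂

variable {G : β → CFG T} {X D : β → T ⊕ ℕ}

theorem primrecPred_reach (hG : Primrec G) (hX : Primrec X) (hD : Primrec D) :
    PrimrecPred fun b => (G b).Reach (X b) (D b) :=
  primrecPred_reflTransGen (primrec_unitEdges.comp hG) hX hD

variable [DecidableEq T] {a : β → T} {r : β → ℕ × List (T ⊕ ℕ)}

theorem primrec_conts (hG : Primrec G) (hX : Primrec X) (hD : Primrec D) :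
    Primrec fun b => (G b).conts (X b) (D b) := by
  have hR : PrimrecRel fun (Y : T ⊕ ℕ) (p : CFG T × (T ⊕ ℕ)) => p.1.Reach p.2 Y :=
    primrecPred_reach (fst.comp snd) (snd.comp snd) fst
  refine list_append.comp (Primrec.ite (primrecPred_reach hG hX hD) (.const _) (.const _)) ?_
  exact list_map (hR.listFilter.comp (primrec_syms.comp hG) (Primrec.pair hG hX))
    (list_cons.comp (Primrec.pair (option_some.comp snd) (hD.comp fst)) (.const [])).to₂

theorem primrec_startRules (hG : Primrec G) (ha : Primrec a) :
    Primrec fun b => (G b).startRules (a b) :=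
  list_flatMap (primrec_syms.comp hG) (list_map
    (primrec_conts (hG.comp fst) (sumInl.comp (ha.comp fst)) snd)
    (Primrec.pair (Primrec.pair (.const none) (snd.comp fst)) snd).to₂).to₂

theorem primrec_stepRules (hG : Primrec G) (ha : Primrec a) (hr : Primrec r) :
    Primrec fun b => (G b).stepRules (a b) (r b) := by
  let B := (β × ((T ⊕ ℕ) × List (T ⊕ ℕ))) × ((T ⊕ ℕ) × List (T ⊕ ℕ))
  have hrule : Primrec fun p : (B × (T ⊕ ℕ)) × (List (Goal T) × List (Goal T)) =>
      (((some p.1.1.1.2.1, p.1.2), p.2.1 ++ p.1.1.2.2.map (Prod.mk none) ++ p.2.2) :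
        Goal T × List (Goal T)) :=
    Primrec.pair (Primrec.pair (option_some.comp (fst.comp (snd.comp (fst.comp (fst.comp fst)))))
      (snd.comp fst)) (list_append.comp (list_append.comp (fst.comp snd)
        (list_map (snd.comp (snd.comp (fst.comp fst))) (Primrec.pair (.const none) snd).to₂))
        (snd.comp snd))
  have hb : Primrec fun p : B × (T ⊕ ℕ) => p.1.1.1 := fst.comp (fst.comp fst)
  have hconts : Primrec fun p : B × (T ⊕ ℕ) =>
      (G p.1.1.1).conts (Sum.inl (a p.1.1.1)) p.1.2.1 ×ˢ
        (G p.1.1.1).conts (Sum.inr (r p.1.1.1).1) p.2 :=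
    primrec₂_product.comp
      (primrec_conts (hG.comp hb) (sumInl.comp (ha.comp hb)) (fst.comp (snd.comp fst)))
      (primrec_conts (hG.comp hb) (sumInr.comp (fst.comp (hr.comp hb))) snd)
  have hlong := list_flatMap (primrec_syms.comp (hG.comp (fst.comp fst)))
    (list_map hconts hrule.to₂).to₂
  refine (list_casesOn (snd.comp hr) (.const [])
    (list_casesOn (snd.comp snd) (.const []) hlong.to₂).to₂).of_eq fun b => ?_
  rw [stepRules]
  rcases (r b).2 with _ | ⟨X, _ | ⟨Y, t⟩⟩ <;> rfl

theorem primrec_leftCorner (hG : Primrec G) (ha : Primrec a) :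
    Primrec fun b => (G b).leftCorner (a b) :=
  list_append.comp (primrec_startRules hG ha) (list_flatMap (snd.comp hG)
    (primrec_stepRules (hG.comp fst) (ha.comp fst) snd).to₂)

theorem primrecTp_letterTp : PrimrecTp fun p : CFG T × T => p.1.letterTp p.2 :=
  PDA.primrecTp_letterTp (primrec_leftCorner fst snd) (primrec_goals.comp fst)
    (list_length.comp (primrec_syms.comp fst))

theorem primrecTp_targetTp : PrimrecTp (targetTp : CFG T → Tp) :=
  PDA.primrecTp_targetTp primrec_goals (list_length.comp primrec_syms)
    (Primrec.pair (.const none) (sumInr.comp fst))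

end CFG

theorem safiullin_unique_type_assignment_general (T : Type) :
    ∃ (A : CFG T → T → Tp) (H : CFG T → Tp),
      (∀ [Primcodable T], Primrec₂ (fun G a => encodeTp (A G a)) ∧
        Primrec fun G => encodeTp (H G)) ∧
      ∀ G, EpsFree G → ∀ w, w ∈ Lang G ↔ DerL (w.map (A G)) (H G) := by
  classical
  exact ⟨CFG.letterTp, CFG.targetTp, ⟨CFG.primrecTp_letterTp, CFG.primrecTp_targetTp⟩,
    fun _ hG _ => CFG.mem_lang_iff_derL hG⟩

/-- Safiullin's theorem: every ε-free context-free language is generated by a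
Lambek categorial grammar with unique type assignment — there are types `A a`
for each letter `a` and a target type `H` such that a non-empty word `w`
belongs to the language iff the sequent `w.map A → H` is derivable in L.
Moreover (second conjunct), for grammars over a countable alphabet such a
categorial grammar can be effectively (computably) constructed from the
context-free grammar. -/
theorem safiullin_unique_type_assignment :
    (∀ (σ : Type) (G : CFG σ), EpsFree G →
      ∃ (A : σ → Tp) (H : Tp), ∀ w : List σ, w ≠ [] →
        (w ∈ Lang G ↔ DerL (w.map A) H)) ∧
    (∃ (F : CFG ℕ → ℕ → ℕ) (Ft : CFG ℕ → ℕ), Computable₂ F ∧ Computable Ft ∧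
      ∀ G : CFG ℕ, EpsFree G →
        ∃ (A : ℕ → Tp) (H : Tp),
          (∀ a : ℕ, F G a = encodeTp (A a)) ∧ Ft G = encodeTp H ∧
          ∀ w : List ℕ, w ≠ [] → (w ∈ Lang G ↔ DerL (w.map A) H)) := by
  refine ⟨fun σ G hG => ?_, ?_⟩
  · obtain ⟨A, H, -, hAH⟩ := safiullin_unique_type_assignment_general σ
    exact ⟨A G, H G, fun w _ => hAH G hG w⟩
  · obtain ⟨A, H, hprim, hAH⟩ := safiullin_unique_type_assignment_general ℕ
    exact ⟨_, _, hprim.1.to_comp, hprim.2.to_comp,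
      fun G hG => ⟨A G, H G, fun _ => rfl, rfl, fun w _ => hAH G hG w⟩⟩
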